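/- Suppose P is a proper real-rational n×n transfer matrix that is negative imaginary (NI) without poles at the origin and C is strictly negative imaginary (SNI). Then the following are equivalent: (a) [τP, C] is stable for all τ ∈ [0,1]; (b) for all τ ∈ [0,1], det(τP(∞)C(∞) − I) ≠ 0, det(τP(0)C(∞) − I) ≠ 0 and det(τP(0)C(0) − I) ≠ 0; (c) for all τ ∈ [0,1], det(τP(∞)C(∞) − I) ≠ 0, det(τP(∞)C(0) − I) ≠ 0 and det(τP(0)C(0) − I) ≠ 0. -/

import Mathlib

open Matrix Polynomial Filter Topology
open scoped ComplexOrder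

noncomputable section

namespace NIControl

/-- Evaluate a real-rational function at a complex point (junk value at poles). -/
def evalC (f : RatFunc ℝ) (s : ℂ) : ℂ :=
  f.eval (algebraMap ℝ ℂ) s

/-- `s` is a pole of the real-rational function `f`
(the reduced denominator vanishes at `s`). -/
def IsPoleAt (f : RatFunc ℝ) (s : ℂ) : Prop :=
  f.denom.eval₂ (algebraMap ℝ ℂ) s = 0

variable {n : ℕ}

/-- Pointwise evaluation of a real-rational transfer matrix at a complex point. -/
def evalM (G : Matrix (Fin n) (Fin n) (RatFunc ℝ)) (s : ℂ) : Matrix (Fin n) (Fin n) ℂ :=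
  Matrix.of fun i j => evalC (G i j) s

/-- Pointwise evaluation of a real-rational transfer matrix at a real point. -/
def evalR (G : Matrix (Fin n) (Fin n) (RatFunc ℝ)) (x : ℝ) : Matrix (Fin n) (Fin n) ℝ :=
  Matrix.of fun i j => (G i j).eval (RingHom.id ℝ) x

/-- Value at `s = ∞` of a proper real-rational function. -/
def atInfinity (f : RatFunc ℝ) : ℝ :=
  if f.num.degree = f.denom.degree then f.num.leadingCoeff / f.denom.leadingCoeff else 0

/-- The instantaneous gain `G(∞)` of a proper real-rational transfer matrix. -/
def evalInf (G : Matrix (Fin n) (Fin n) (RatFunc ℝ)) : Matrix (Fin n) (Fin n) ℝ :=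
  Matrix.of fun i j => atInfinity (G i j)

/-- The matrix `G` has a pole at `s`. -/
def HasPole (G : Matrix (Fin n) (Fin n) (RatFunc ℝ)) (s : ℂ) : Prop :=
  ∃ i j, IsPoleAt (G i j) s

/-- All entries of `G` are proper rational functions. -/
def Proper (G : Matrix (Fin n) (Fin n) (RatFunc ℝ)) : Prop :=
  ∀ i j, (G i j).num.degree ≤ (G i j).denom.degree

/-- All entries of `G` are strictly proper rational functions. -/
def StrictlyProper (G : Matrix (Fin n) (Fin n) (RatFunc ℝ)) : Prop :=
  ∀ i j, (G i j).num.degree < (G i j).denom.degree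

/-- The pole of `G` at the origin (if any) is at most simple. -/
def NoDoubleOriginPole (G : Matrix (Fin n) (Fin n) (RatFunc ℝ)) : Prop :=
  ∀ i j, (G i j).denom.rootMultiplicity 0 ≤ 1

/-- Membership in `RH∞`: proper and no poles in the closed right-half complex plane. -/
def MemRHinf {m : Type*} [Fintype m] (G : Matrix m m (RatFunc ℝ)) : Prop :=
  (∀ i j, (G i j).num.degree ≤ (G i j).denom.degree) ∧
  ∀ s : ℂ, 0 ≤ s.re → ∀ i j, ¬ IsPoleAt (G i j) s

/-- The point `jω` on the imaginary axis. -/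
def jw (ω : ℝ) : ℂ := Complex.I * (ω : ℂ)

/-- The negative-imaginary frequency kernel `j (M − M*)`. -/
def niKer (M : Matrix (Fin n) (Fin n) ℂ) : Matrix (Fin n) (Fin n) ℂ :=
  Complex.I • (M - Mᴴ)

/-- Negative imaginary (NI) real-rational transfer matrix. -/
def IsNI (G : Matrix (Fin n) (Fin n) (RatFunc ℝ)) : Prop :=
  Proper G ∧
  (∀ s : ℂ, 0 < s.re → ¬ HasPole G s) ∧
  (∀ ω : ℝ, 0 < ω → ¬ HasPole G (jw ω) → (niKer (evalM G (jw ω))).PosSemidef) ∧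
  (∀ ω : ℝ, 0 < ω → HasPole G (jw ω) →
    ∃ R : Matrix (Fin n) (Fin n) ℂ, R.PosSemidef ∧
      Tendsto (fun s : ℂ => (s - jw ω) • Complex.I • evalM G s) (𝓝[≠] jw ω) (𝓝 R)) ∧
  (HasPole G 0 →
    (∀ k : ℕ, 3 ≤ k → Tendsto (fun s : ℂ => s ^ k • evalM G s) (𝓝[≠] 0) (𝓝 0)) ∧
    ∃ R : Matrix (Fin n) (Fin n) ℂ, R.PosSemidef ∧
      Tendsto (fun s : ℂ => s ^ 2 • evalM G s) (𝓝[≠] 0) (𝓝 R))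

/-- Strictly negative imaginary (SNI) real-rational transfer matrix. -/
def IsSNI (G : Matrix (Fin n) (Fin n) (RatFunc ℝ)) : Prop :=
  MemRHinf G ∧ ∀ ω : ℝ, 0 < ω → (niKer (evalM G (jw ω))).PosDef

/-- Positive real (passive) real-rational transfer matrix. -/
def IsPositiveReal (G : Matrix (Fin n) (Fin n) (RatFunc ℝ)) : Prop :=
  MemRHinf G ∧ ∀ ω : ℝ, 0 ≤ ω → (evalM G (jw ω) + (evalM G (jw ω))ᴴ).PosSemidef

/-- Output strictly passive real-rational transfer matrix. -/
def IsOSP (G : Matrix (Fin n) (Fin n) (RatFunc ℝ)) : Prop :=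
  MemRHinf G ∧ ∃ ε : ℝ, 0 < ε ∧ ∀ ω : ℝ, 0 ≤ ω →
    (evalM G (jw ω) + (evalM G (jw ω))ᴴ -
      (ε : ℂ) • ((evalM G (jw ω))ᴴ * evalM G (jw ω))).PosSemidef

/-- Stability of the positive feedback interconnection `[P, C]`:
`[I; C] (I − P C)⁻¹ [I, P] ∈ RH∞`. -/
def FeedbackStable (P C : Matrix (Fin n) (Fin n) (RatFunc ℝ)) : Prop :=
  ((1 : Matrix (Fin n) (Fin n) (RatFunc ℝ)) - P * C).det ≠ 0 ∧
  MemRHinf (Matrix.fromBlocks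
    (1 - P * C)⁻¹ ((1 - P * C)⁻¹ * P)
    (C * (1 - P * C)⁻¹) (C * (1 - P * C)⁻¹ * P))

/-- All eigenvalues of the complex matrix `M` are real and less than `c`. -/
def eigsRealAndLT (M : Matrix (Fin n) (Fin n) ℂ) (c : ℝ) : Prop :=
  ∀ μ ∈ spectrum ℂ M, μ.im = 0 ∧ μ.re < c

/-- The (real) eigenvalues of the real matrix `M` are all real and its largest
eigenvalue is less than `c`. -/
def maxEigLT (M : Matrix (Fin n) (Fin n) ℝ) (c : ℝ) : Prop :=
  eigsRealAndLT (M.map (Complex.ofReal)) c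

/-- Loewner order `A ≤ B` on real matrices. -/
def LoewnerLE (A B : Matrix (Fin n) (Fin n) ℝ) : Prop := (B - A).PosSemidef

/-- Strict Loewner order `A < B` on real matrices. -/
def LoewnerLT (A B : Matrix (Fin n) (Fin n) ℝ) : Prop := (B - A).PosDef

/-!
The loop `[Q, C]` is stable when the block matrix `[[I, -Q], [-C, I]]` has a bounded inverse on the
right half-plane. At the frequencies `0 < ω < ∞` of the imaginary axis it is invertible for every NI
`Q` and SNI `C`, because `y = C x` and `x = Q y` force `im (x* C x) = 0`. So only `ω = 0` and
`ω = ∞` can obstruct stability. A lower bound on the axis that is uniform in `τ` spreads from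
`τ = 0` to all `τ ∈ [0, 1]` by connectedness, the Phragmén–Lindelöf principle carrying it from the
axis into the half-plane. Poles of `P` on the axis are avoided by working with
`P(0) - s/(s+δ) (P(0) - P(s+δ))` and letting `δ → 0`; this perturbation is again NI since the secant
`(P(0) - P(s))/s` is positive real.

As for the mixed determinants, `G(∞) ≤ G(0)` for NI `G`, both matrices being symmetric. The positive
index of inertia of `[[P, I], [I, C]]` is monotone in `P` and `C` and constant along a nonsingular
deformation, and a symmetric matrix squeezed between two nonsingular ones of equal index is itself
nonsingular.
-/

section Inertia

open scoped MatrixOrder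

variable {m : Type*} [Fintype m] [DecidableEq m] {A B M : Matrix m m ℝ}

/-- The positive index of inertia of the quadratic form `x ↦ xᵀ A x`. -/
def posIndex (A : Matrix m m ℝ) : ℕ :=
  sigPos A.toQuadraticForm'

lemma toQuadraticForm'_apply (A : Matrix m m ℝ) (x : m → ℝ) :
    A.toQuadraticForm' x = x ⬝ᵥ A *ᵥ x := by
  simp [Matrix.toQuadraticForm', toLinearMap₂'_apply']

lemma neg_toQuadraticForm' (A : Matrix m m ℝ) :
    (-A).toQuadraticForm' = -A.toQuadraticForm' := by
  ext x
  simp [toQuadraticForm'_apply, neg_mulVec]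

lemma finrank_le_posIndex {V : Submodule ℝ (m → ℝ)}
    (hV : ∀ x ∈ V, x ≠ 0 → 0 < x ⬝ᵥ A *ᵥ x) : Module.finrank ℝ V ≤ posIndex A := by
  refine le_sigPos_of_posDef _ fun x hx => ?_
  rw [QuadraticMap.restrict_apply, toQuadraticForm'_apply]
  exact hV x x.2 (by simpa using hx)

lemma exists_finrank_eq_posIndex (A : Matrix m m ℝ) :
    ∃ V : Submodule ℝ (m → ℝ), Module.finrank ℝ V = posIndex A ∧
      ∀ x ∈ V, x ≠ 0 → 0 < x ⬝ᵥ A *ᵥ x := by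
  obtain ⟨V, hrank, hV⟩ := exists_finrank_eq_sigPos_and_posDef A.toQuadraticForm'
  refine ⟨V, hrank, fun x hx hx0 => ?_⟩
  rw [← toQuadraticForm'_apply]
  exact hV ⟨x, hx⟩ (by simpa using hx0)

lemma posIndex_mono (h : A ≤ B) : posIndex A ≤ posIndex B := by
  obtain ⟨V, hrank, hV⟩ := exists_finrank_eq_posIndex A
  refine hrank ▸ finrank_le_posIndex fun x hx hx0 => (hV x hx hx0).trans_le ?_
  have hAB := (Matrix.le_iff.1 h).dotProduct_mulVec_nonneg x
  rwa [star_trivial, sub_mulVec, dotProduct_sub, sub_nonneg] at hAB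

lemma det_ne_zero_iff_radical_eq_bot (hA : A.IsSymm) :
    A.det ≠ 0 ↔ A.toQuadraticForm'.radical = ⊥ := by
  have mem_radical (x : m → ℝ) : x ∈ A.toQuadraticForm'.radical ↔ A *ᵥ x = 0 := by
    have hswap (y : m → ℝ) : y ⬝ᵥ A *ᵥ x = x ⬝ᵥ A *ᵥ y := by
      rw [dotProduct_mulVec, dotProduct_comm, ← mulVec_transpose, hA.eq]
    simp only [QuadraticMap.mem_radical_iff', toQuadraticForm'_apply, mulVec_add, dotProduct_add,
      add_dotProduct, ← hswap]
    refine ⟨fun h => dotProduct_eq_zero _ fun y => ?_, fun h => by simp [h]⟩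
    rw [dotProduct_comm]
    linarith [h.1, h.2 y]
  rw [Submodule.eq_bot_iff, ← not_iff_not]
  push Not
  rw [← exists_mulVec_eq_zero_iff]
  exact exists_congr fun x => by rw [mem_radical, and_comm]

lemma posIndex_add_posIndex_neg_add_finrank_radical (A : Matrix m m ℝ) :
    posIndex A + posIndex (-A) + Module.finrank ℝ A.toQuadraticForm'.radical = Fintype.card m := by
  rw [posIndex, posIndex, neg_toQuadraticForm', sigPos_neg,
    QuadraticForm.sigPos_add_sigNeg_add_radical, Module.finrank_fintype_fun_eq_card]

lemma det_ne_zero_iff_posIndex_add (hA : A.IsSymm) :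
    A.det ≠ 0 ↔ posIndex A + posIndex (-A) = Fintype.card m := by
  have hsum := posIndex_add_posIndex_neg_add_finrank_radical A
  rw [det_ne_zero_iff_radical_eq_bot hA, ← Submodule.finrank_eq_zero]
  lia

lemma det_ne_zero_of_le_of_le (hM : M.IsSymm) (hB : B.IsSymm) (hAM : A ≤ M) (hMB : M ≤ B)
    (hBdet : B.det ≠ 0) (hindex : posIndex A = posIndex B) : M.det ≠ 0 := by
  rw [det_ne_zero_iff_posIndex_add hM]
  have hAM' := posIndex_mono hAM
  have hMB' := posIndex_mono (neg_le_neg hMB)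
  have hsum := posIndex_add_posIndex_neg_add_finrank_radical M
  have hcard := (det_ne_zero_iff_posIndex_add hB).1 hBdet
  lia

lemma eventually_posIndex_le (A : Matrix m m ℝ) : ∀ᶠ B in 𝓝 A, posIndex A ≤ posIndex B := by
  obtain ⟨V, hrank, hV⟩ := exists_finrank_eq_posIndex A
  have hcompact : IsCompact (Metric.sphere (0 : m → ℝ) 1 ∩ V) :=
    (isCompact_sphere _ _).inter_right V.closed_of_finiteDimensional
  have hpos : ∀ᶠ B in 𝓝 A, ∀ x ∈ Metric.sphere (0 : m → ℝ) 1 ∩ V, 0 < x ⬝ᵥ B *ᵥ x := by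
    refine hcompact.eventually_forall_of_forall_eventually fun x hx => ?_
    have hcont : Continuous fun p : Matrix m m ℝ × (m → ℝ) => p.2 ⬝ᵥ p.1 *ᵥ p.2 := by fun_prop
    refine hcont.continuousAt.eventually (lt_mem_nhds (hV x hx.2 ?_))
    exact ne_zero_of_mem_unit_sphere ⟨x, hx.1⟩
  filter_upwards [hpos] with B hB
  rw [← hrank]
  refine finrank_le_posIndex fun x hx hx0 => ?_
  have hnorm : 0 < ‖x‖ := norm_pos_iff.2 hx0
  have hscaled := hB (‖x‖⁻¹ • x)
    ⟨by simp [norm_smul, hnorm.ne'], V.smul_mem _ hx⟩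
  rw [mulVec_smul, smul_dotProduct, dotProduct_smul, smul_eq_mul, smul_eq_mul] at hscaled
  exact pos_of_mul_pos_right (pos_of_mul_pos_right hscaled (by positivity)) (by positivity)

lemma posIndex_eq_of_isPreconnected {ι : Type*} [TopologicalSpace ι] {T : Set ι}
    (hT : IsPreconnected T) {A : ι → Matrix m m ℝ} (hA : ContinuousOn A T)
    (hsymm : ∀ i ∈ T, (A i).IsSymm) (hdet : ∀ i ∈ T, (A i).det ≠ 0)
    {i j : ι} (hi : i ∈ T) (hj : j ∈ T) : posIndex (A i) = posIndex (A j) := by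
  refine hT.induction₂ (fun i j => posIndex (A i) = posIndex (A j)) (fun i hi => ?_)
    (fun _ _ _ _ _ _ => Eq.trans) (fun _ _ _ _ => Eq.symm) hi hj
  filter_upwards [(hA i hi).eventually (eventually_posIndex_le _),
    (hA i hi).neg.eventually (eventually_posIndex_le _), self_mem_nhdsWithin] with j hpos hneg hj
  have hi' := (det_ne_zero_iff_posIndex_add (hsymm i hi)).1 (hdet i hi)
  have hj' := (det_ne_zero_iff_posIndex_add (hsymm j hj)).1 (hdet j hj)
  simp only [Pi.neg_apply] at hneg
  lia

end Inertia

section SymmetricLoop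

open scoped MatrixOrder

variable {m : Type*} [DecidableEq m]

/-- The symmetric block matrix `[P, 1; 1, C]`, singular exactly when `P * C - 1` is. For symmetric
`P` and `C` it turns nonsingularity of `P * C - 1` into a question of inertia. -/
def symmLoop (P C : Matrix m m ℝ) : Matrix (m ⊕ m) (m ⊕ m) ℝ :=
  fromBlocks P 1 1 C

lemma isSymm_symmLoop {P C : Matrix m m ℝ} (hP : P.IsSymm) (hC : C.IsSymm) :
    (symmLoop P C).IsSymm :=
  IsSymm.fromBlocks hP transpose_one hC

lemma continuous_symmLoop {X : Type*} [TopologicalSpace X] {P C : X → Matrix m m ℝ}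
    (hP : Continuous P) (hC : Continuous C) : Continuous fun x => symmLoop (P x) (C x) :=
  hP.matrix_fromBlocks continuous_const continuous_const hC

lemma symmLoop_le_symmLoop [Finite m] {P P' C C' : Matrix m m ℝ} (hP : P ≤ P')
    (hC : C ≤ C') : symmLoop P C ≤ symmLoop P' C' := by
  cases nonempty_fintype m
  rw [Matrix.le_iff] at *
  have hdiag : symmLoop P' C' - symmLoop P C = fromBlocks (P' - P) 0 0 (C' - C) := by
    ext (i | i) (j | j) <;> simp [symmLoop]
  rw [hdiag]
  refine .of_dotProduct_mulVec_nonneg (hP.1.fromBlocks (by simp) hC.1) fun x => ?_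
  obtain ⟨u, v, rfl⟩ : ∃ u v, x = Sum.elim u v := ⟨x ∘ Sum.inl, x ∘ Sum.inr, by simp⟩
  simpa [fromBlocks_mulVec, sumElim_dotProduct_sumElim] using
    add_nonneg (hP.dotProduct_mulVec_nonneg u) (hC.dotProduct_mulVec_nonneg v)

variable [Fintype m]

lemma det_symmLoop_ne_zero_iff (P C : Matrix m m ℝ) :
    (symmLoop P C).det ≠ 0 ↔ (P * C - 1).det ≠ 0 := by
  let swap : Matrix (m ⊕ m) (m ⊕ m) ℝ := fromBlocks 0 1 1 0
  have hswap : swap.det ≠ 0 := by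
    refine (IsUnit.of_mul_eq_one swap.det ?_).ne_zero
    simp [swap, ← det_mul, fromBlocks_multiply]
  have hmul : symmLoop P C * swap = fromBlocks 1 P C 1 := by
    simp [swap, symmLoop, fromBlocks_multiply]
  rw [← mul_ne_zero_iff_right hswap, ← det_mul, hmul, det_fromBlocks_one₂₂, ← neg_sub, det_neg]
  simp

lemma posIndex_symmLoop_smul {P C : Matrix m m ℝ} (hP : P.IsSymm) (hC : C.IsSymm)
    (h : ∀ τ ∈ Set.Icc (0 : ℝ) 1, (τ • (P * C) - 1).det ≠ 0) {τ : ℝ}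
    (hτ : τ ∈ Set.Icc (0 : ℝ) 1) : posIndex (symmLoop (τ • P) C) = posIndex (symmLoop 0 C) := by
  rw [← zero_smul ℝ P]
  refine posIndex_eq_of_isPreconnected (A := fun τ : ℝ => symmLoop (τ • P) C) isPreconnected_Icc
    ?_ (fun τ _ => isSymm_symmLoop (hP.smul τ) hC) (fun τ hτ => ?_) hτ
    (Set.left_mem_Icc.2 zero_le_one)
  · exact (continuous_symmLoop (by fun_prop) continuous_const).continuousOn
  · rw [det_symmLoop_ne_zero_iff, smul_mul_assoc]
    exact h τ hτ

lemma posIndex_symmLoop_zero_left {C : Matrix m m ℝ} (hC : C.IsSymm) :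
    posIndex (symmLoop 0 C) = posIndex (symmLoop 0 (0 : Matrix m m ℝ)) := by
  have hconst := posIndex_eq_of_isPreconnected (A := fun t : ℝ => symmLoop 0 (t • C))
    isPreconnected_univ (continuous_symmLoop continuous_const (by fun_prop)).continuousOn
    (fun t _ => isSymm_symmLoop isSymm_zero (hC.smul t))
    (fun t _ => (det_symmLoop_ne_zero_iff _ _).2 (by simp [det_neg]))
    (Set.mem_univ 1) (Set.mem_univ 0)
  simpa using hconst

lemma det_smul_mul_sub_one_ne_zero_of_mem_Icc {P₀ P₁ C₀ C₁ P C : Matrix m m ℝ}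
    (hP₀ : P₀.IsSymm) (hP₁ : P₁.IsSymm) (hC₀ : C₀.IsSymm) (hC₁ : C₁.IsSymm)
    (h₀ : ∀ τ ∈ Set.Icc (0 : ℝ) 1, (τ • (P₀ * C₀) - 1).det ≠ 0)
    (h₁ : ∀ τ ∈ Set.Icc (0 : ℝ) 1, (τ • (P₁ * C₁) - 1).det ≠ 0)
    (hP : P ∈ Set.Icc P₁ P₀) (hC : C ∈ Set.Icc C₁ C₀) {τ : ℝ} (hτ : τ ∈ Set.Icc (0 : ℝ) 1) :
    (τ • (P * C) - 1).det ≠ 0 := by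
  have isSymm_of_le {X Y : Matrix m m ℝ} (hX : X.IsSymm) (hXY : X ≤ Y) : Y.IsSymm := by
    have hsum := (isHermitian_iff_isSymm.1 (Matrix.le_iff.1 hXY).1).add hX
    rwa [sub_add_cancel] at hsum
  have smul_mono {X Y : Matrix m m ℝ} (h : X ≤ Y) : τ • X ≤ τ • Y := by
    rw [Matrix.le_iff] at *
    rw [← smul_sub]
    exact h.smul hτ.1
  rw [← smul_mul_assoc, ← det_symmLoop_ne_zero_iff]
  refine det_ne_zero_of_le_of_le
    (isSymm_symmLoop ((isSymm_of_le hP₁ hP.1).smul τ) (isSymm_of_le hC₁ hC.1))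
    (isSymm_symmLoop (hP₀.smul τ) hC₀) (symmLoop_le_symmLoop (smul_mono hP.1) hC.1)
    (symmLoop_le_symmLoop (smul_mono hP.2) hC.2) ?_ ?_
  · rw [det_symmLoop_ne_zero_iff, smul_mul_assoc]
    exact h₀ τ hτ
  · rw [posIndex_symmLoop_smul hP₁ hC₁ h₁ hτ, posIndex_symmLoop_smul hP₀ hC₀ h₀ hτ,
      posIndex_symmLoop_zero_left hC₁, posIndex_symmLoop_zero_left hC₀]

end SymmetricLoop

section RationalFunctions

lemma evalC_eq_div (f : RatFunc ℝ) (s : ℂ) : evalC f s = aeval s f.num / aeval s f.denom := rfl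

lemma isPoleAt_iff_aeval_denom {f : RatFunc ℝ} {s : ℂ} : IsPoleAt f s ↔ aeval s f.denom = 0 :=
  Iff.rfl

lemma evalC_star (f : RatFunc ℝ) (s : ℂ) : evalC f (star s) = star (evalC f s) := by
  simp [evalC_eq_div, aeval_conj]

lemma evalC_ofReal (f : RatFunc ℝ) (x : ℝ) : evalC f x = (f.eval (RingHom.id ℝ) x : ℝ) := by
  simp only [evalC_eq_div, ← Complex.coe_algebraMap, aeval_algebraMap_apply, ← map_div₀]
  rfl

lemma differentiableAt_evalC {f : RatFunc ℝ} {s : ℂ} (h : ¬ IsPoleAt f s) :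
    DifferentiableAt ℂ (evalC f) s :=
  f.num.differentiableAt_aeval.div f.denom.differentiableAt_aeval h

lemma eventually_cofinite_not_isPoleAt (f : RatFunc ℝ) : ∀ᶠ s in cofinite, ¬ IsPoleAt f s := by
  have hdenom : f.denom.map (algebraMap ℝ ℂ) ≠ 0 :=
    (Polynomial.map_ne_zero_iff (algebraMap ℝ ℂ).injective).2 f.denom_ne_zero
  filter_upwards [eventually_cofinite_not_isRoot hdenom] with s hs
  rwa [isPoleAt_iff_aeval_denom, ← eval_map_algebraMap]

lemma degree_num_sub_atInfinity_lt {f : RatFunc ℝ} (h : f.num.degree ≤ f.denom.degree) :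
    (f.num - C (atInfinity f) * f.denom).degree < f.denom.degree := by
  rcases h.lt_or_eq with hlt | heq
  · simpa [atInfinity, hlt.ne] using hlt
  · have hnum : f.num ≠ 0 := fun h0 => by
      rw [h0, degree_zero] at heq
      exact f.denom_ne_zero (degree_eq_bot.1 heq.symm)
    have hlead : f.denom.leadingCoeff ≠ 0 := leadingCoeff_ne_zero.2 f.denom_ne_zero
    have hlim : atInfinity f = f.num.leadingCoeff / f.denom.leadingCoeff := if_pos heq
    have hlim0 : atInfinity f ≠ 0 := hlim ▸ div_ne_zero (leadingCoeff_ne_zero.2 hnum) hlead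
    rw [← heq]
    refine degree_sub_lt_left (by rw [degree_C_mul hlim0, heq]) hnum ?_
    rw [leadingCoeff_mul, leadingCoeff_C, hlim, div_mul_cancel₀ _ hlead]

lemma tendsto_evalC_cobounded {f : RatFunc ℝ} (h : f.num.degree ≤ f.denom.degree) :
    Tendsto (evalC f) (Bornology.cobounded ℂ) (𝓝 (atInfinity f)) := by
  have hdeg : ((f.num - C (atInfinity f) * f.denom).map (algebraMap ℝ ℂ)).degree <
      (f.denom.map (algebraMap ℝ ℂ)).degree := by
    simpa only [degree_map] using degree_num_sub_atInfinity_lt h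
  have hlim := (isLittleO_cobounded_of_degree_lt hdeg).tendsto_div_nhds_zero.add_const
    (atInfinity f : ℂ)
  rw [zero_add] at hlim
  refine hlim.congr' ?_
  filter_upwards [Bornology.le_cofinite _ (eventually_cofinite_not_isPoleAt f)] with s hs
  rw [isPoleAt_iff_aeval_denom] at hs
  simp only [eval_map_algebraMap, map_sub, map_mul, aeval_C, Complex.coe_algebraMap, evalC_eq_div]
  field_simp
  ring

lemma not_isPoleAt_of_eventually_norm_le {f : RatFunc ℝ} {s : ℂ} {l : Filter ℂ} [l.NeBot]
    (hl : l ≤ 𝓝 s) {K : ℝ} (h : ∀ᶠ z in l, ¬ IsPoleAt f z ∧ ‖evalC f z‖ ≤ K) :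
    ¬ IsPoleAt f s := by
  intro hpole
  rw [isPoleAt_iff_aeval_denom] at hpole
  have tendsto_aeval (p : ℝ[X]) : Tendsto (fun z => aeval z p) l (𝓝 (aeval s p)) :=
    (p.continuous_aeval.tendsto s).mono_left hl
  have hnum : aeval s f.num = 0 := by
    refine tendsto_nhds_unique (tendsto_aeval f.num)
      (squeeze_zero_norm' (a := fun z => K * ‖aeval z f.denom‖) ?_ ?_)
    · filter_upwards [h] with z ⟨hz, hK⟩
      rw [isPoleAt_iff_aeval_denom, ← ne_eq, ← norm_pos_iff] at hz
      rwa [evalC_eq_div, norm_div, div_le_iff₀ hz] at hK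
    · simpa [hpole] using (tendsto_aeval f.denom).norm.const_mul K
  obtain ⟨a, b, hab⟩ := f.isCoprime_num_denom
  simpa [hnum, hpole] using congrArg (aeval s) hab

lemma degree_num_le_of_eventually_norm_le {f : RatFunc ℝ} {K : ℝ}
    (h : ∀ᶠ x : ℝ in atTop, ‖evalC f x‖ ≤ K) : f.num.degree ≤ f.denom.degree := by
  by_contra! hlt
  have hunbounded := abs_div_tendsto_atTop_atTop_of_degree_gt f.num f.denom hlt f.denom_ne_zero
  obtain ⟨x, hle, hgt⟩ := (h.and (hunbounded.eventually_gt_atTop K)).exists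
  rw [evalC_ofReal, Complex.norm_real, Real.norm_eq_abs] at hle
  exact hgt.not_ge hle

end RationalFunctions

section MatrixEvaluation

/-- The subring of real-rational functions without a pole at `s`. -/
def regularAt (s : ℂ) : Subring (RatFunc ℝ) where
  carrier := {f | ¬ IsPoleAt f s}
  mul_mem' {f g} hf hg hfg := by
    have hdvd := eval₂_dvd (algebraMap ℝ ℂ) s (RatFunc.denom_mul_dvd f g)
    rw [show eval₂ _ s (f * g).denom = 0 from hfg, zero_dvd_iff, eval₂_mul] at hdvd
    exact mul_ne_zero hf hg hdvd
  one_mem' := by simp [IsPoleAt]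
  add_mem' {f g} hf hg hfg := by
    have hdvd := eval₂_dvd (algebraMap ℝ ℂ) s (RatFunc.denom_add_dvd f g)
    rw [show eval₂ _ s (f + g).denom = 0 from hfg, zero_dvd_iff, eval₂_mul] at hdvd
    exact mul_ne_zero hf hg hdvd
  zero_mem' := by simp [IsPoleAt]
  neg_mem' {f} hf hneg := by
    have hmul : RatFunc.C (-1) * f = -f := by simp
    have hdvd := eval₂_dvd (algebraMap ℝ ℂ) s (RatFunc.denom_mul_dvd (RatFunc.C (-1)) f)
    rw [hmul, show eval₂ _ s (-f).denom = 0 from hneg, RatFunc.denom_C, one_mul,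
      zero_dvd_iff] at hdvd
    exact hf hdvd

lemma mem_regularAt {f : RatFunc ℝ} {s : ℂ} : f ∈ regularAt s ↔ ¬ IsPoleAt f s :=
  Iff.rfl

/-- Evaluation at `s`, a ring homomorphism on the functions that are regular there. -/
def evalHom (s : ℂ) : regularAt s →+* ℂ where
  toFun f := evalC f s
  map_one' := by simp [evalC]
  map_mul' f g := RatFunc.eval_mul _ _ f.2 g.2
  map_zero' := by simp [evalC]
  map_add' f g := RatFunc.eval_add _ _ f.2 g.2

variable {m : Type*}

/-- Entrywise evaluation at `s`: `evalM` for an arbitrary index type. -/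
def evalMatrix (A : Matrix m m (RatFunc ℝ)) (s : ℂ) : Matrix m m ℂ :=
  A.map (evalC · s)

/-- Entrywise value at infinity: `evalInf` for an arbitrary index type, over `ℂ`. -/
def matrixAtInfinity (A : Matrix m m (RatFunc ℝ)) : Matrix m m ℂ :=
  A.map fun f => (atInfinity f : ℂ)

lemma evalMatrix_zero (s : ℂ) : evalMatrix (0 : Matrix m m (RatFunc ℝ)) s = 0 := by
  ext
  simp [evalMatrix, evalC]

lemma evalMatrix_one [DecidableEq m] (s : ℂ) : evalMatrix (1 : Matrix m m (RatFunc ℝ)) s = 1 :=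
  Matrix.map_one _ (by simp [evalC]) (by simp [evalC])

lemma evalMatrix_fromBlocks (A B C D : Matrix m m (RatFunc ℝ)) (s : ℂ) :
    evalMatrix (fromBlocks A B C D) s =
      fromBlocks (evalMatrix A s) (evalMatrix B s) (evalMatrix C s) (evalMatrix D s) :=
  fromBlocks_map ..

lemma evalMatrix_star (A : Matrix m m (RatFunc ℝ)) (s : ℂ) :
    evalMatrix A (star s) = (evalMatrix A s).map star :=
  ext fun _ _ => evalC_star _ s

lemma tendsto_evalMatrix_cobounded {A : Matrix m m (RatFunc ℝ)}
    (h : ∀ i j, (A i j).num.degree ≤ (A i j).denom.degree) :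
    Tendsto (evalMatrix A) (Bornology.cobounded ℂ) (𝓝 (matrixAtInfinity A)) :=
  tendsto_pi_nhds.2 fun i => tendsto_pi_nhds.2 fun j => tendsto_evalC_cobounded (h i j)

variable [Fintype m] [DecidableEq m] {A B : Matrix m m (RatFunc ℝ)} {s : ℂ}

lemma continuousAt_evalMatrix (hA : A ∈ (regularAt s).matrix) : ContinuousAt (evalMatrix A) s :=
  continuousAt_pi.2 fun i => continuousAt_pi.2 fun j =>
    (differentiableAt_evalC (hA i j)).continuousAt

lemma eventually_cofinite_mem_regularAt (A : Matrix m m (RatFunc ℝ)) :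
    ∀ᶠ s in cofinite, A ∈ (regularAt s).matrix :=
  eventually_all.2 fun _ => eventually_all.2 fun _ => eventually_cofinite_not_isPoleAt _

lemma exists_evalHom_mapMatrix_eq (hA : A ∈ (regularAt s).matrix) :
    ∃ A' : Matrix m m (regularAt s),
      (regularAt s).subtype.mapMatrix A' = A ∧ (evalHom s).mapMatrix A' = evalMatrix A s :=
  ⟨of fun i j => ⟨A i j, hA i j⟩, rfl, rfl⟩

lemma evalMatrix_subtype_mapMatrix (A : Matrix m m (regularAt s)) :
    evalMatrix ((regularAt s).subtype.mapMatrix A) s = (evalHom s).mapMatrix A :=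
  rfl

lemma evalMatrix_mul (hA : A ∈ (regularAt s).matrix) (hB : B ∈ (regularAt s).matrix) :
    evalMatrix (A * B) s = evalMatrix A s * evalMatrix B s := by
  obtain ⟨A, rfl, hA'⟩ := exists_evalHom_mapMatrix_eq hA
  obtain ⟨B, rfl, hB'⟩ := exists_evalHom_mapMatrix_eq hB
  rw [← hA', ← hB', ← map_mul, ← map_mul, evalMatrix_subtype_mapMatrix]

lemma evalMatrix_add (hA : A ∈ (regularAt s).matrix) (hB : B ∈ (regularAt s).matrix) :
    evalMatrix (A + B) s = evalMatrix A s + evalMatrix B s := by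
  obtain ⟨A, rfl, hA'⟩ := exists_evalHom_mapMatrix_eq hA
  obtain ⟨B, rfl, hB'⟩ := exists_evalHom_mapMatrix_eq hB
  rw [← hA', ← hB', ← map_add, ← map_add, evalMatrix_subtype_mapMatrix]

lemma evalMatrix_neg (hA : A ∈ (regularAt s).matrix) : evalMatrix (-A) s = -evalMatrix A s := by
  obtain ⟨A, rfl, hA'⟩ := exists_evalHom_mapMatrix_eq hA
  rw [← hA', ← map_neg, ← map_neg, evalMatrix_subtype_mapMatrix]

lemma evalC_det (hA : A ∈ (regularAt s).matrix) : evalC A.det s = (evalMatrix A s).det := by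
  obtain ⟨A, rfl, hA'⟩ := exists_evalHom_mapMatrix_eq hA
  rw [← hA', ← RingHom.map_det, ← RingHom.map_det]
  rfl

lemma C_mem_regularAt (τ : ℝ) : RatFunc.C τ ∈ regularAt s := by
  simp [mem_regularAt, IsPoleAt]

lemma smul_mem_regularAt_matrix (τ : ℝ) (hA : A ∈ (regularAt s).matrix) :
    τ • A ∈ (regularAt s).matrix := fun i j => by
  rw [Matrix.smul_apply, RatFunc.smul_eq_C_mul]
  exact (regularAt s).mul_mem (C_mem_regularAt τ) (hA i j)

lemma evalMatrix_smul (τ : ℝ) (hA : A ∈ (regularAt s).matrix) :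
    evalMatrix (τ • A) s = (τ : ℂ) • evalMatrix A s := by
  ext i j
  have hmul : evalC (RatFunc.C τ * A i j) s = evalC (RatFunc.C τ) s * evalC (A i j) s :=
    RatFunc.eval_mul _ _ (C_mem_regularAt τ) (hA i j)
  simpa [evalMatrix, RatFunc.smul_eq_C_mul, evalC] using hmul

end MatrixEvaluation

section TransferMatrices

variable {G : Matrix (Fin n) (Fin n) (RatFunc ℝ)}

lemma mem_regularAt_matrix_iff {s : ℂ} : G ∈ (regularAt s).matrix ↔ ¬ HasPole G s := by
  simp only [HasPole, not_exists]
  rfl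

lemma evalMatrix_zero_point (G : Matrix (Fin n) (Fin n) (RatFunc ℝ)) :
    evalMatrix G 0 = (evalR G 0).map Complex.ofReal := by
  ext i j
  exact evalC_ofReal (G i j) 0

lemma matrixAtInfinity_eq (G : Matrix (Fin n) (Fin n) (RatFunc ℝ)) :
    matrixAtInfinity G = (evalInf G).map Complex.ofReal :=
  rfl

end TransferMatrices

section BoundedBelow

open scoped Matrix.Norms.Operator

variable {m : Type*} [Fintype m] {κ κ' ε : ℝ} {A B : Matrix m m ℂ}

/-- `A` expands the supremum norm at least by the factor `κ`; equivalently (for `κ > 0`), `A` is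
invertible with `‖A⁻¹‖ ≤ κ⁻¹`. It measures invertibility uniformly in a parameter. -/
def BoundedBelow (κ : ℝ) (A : Matrix m m ℂ) : Prop :=
  ∀ z : m → ℂ, κ * ‖z‖ ≤ ‖A *ᵥ z‖

lemma BoundedBelow.mono (h : BoundedBelow κ A) (hκ : κ' ≤ κ) : BoundedBelow κ' A := fun z =>
  (mul_le_mul_of_nonneg_right hκ (norm_nonneg z)).trans (h z)

lemma BoundedBelow.map_star (h : BoundedBelow κ A) : BoundedBelow κ (A.map star) := fun z => by
  have hstar : A.map star *ᵥ z = star (A *ᵥ star z) := by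
    ext i
    simp [mulVec, dotProduct]
  rw [hstar, norm_star, ← norm_star z]
  exact h (star z)

lemma BoundedBelow.sub_norm (h : BoundedBelow κ A) (hAB : ‖A - B‖ ≤ ε) :
    BoundedBelow (κ - ε) B := fun z => by
  have htriangle : ‖A *ᵥ z‖ ≤ ‖B *ᵥ z‖ + ‖(A - B) *ᵥ z‖ := by
    rw [sub_mulVec]
    exact norm_le_norm_add_norm_sub' _ _
  have hdiff : ‖(A - B) *ᵥ z‖ ≤ ε * ‖z‖ :=
    (linfty_opNorm_mulVec _ _).trans (mul_le_mul_of_nonneg_right hAB (norm_nonneg z))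
  linarith [h z]

lemma boundedBelow_of_forall_norm_eq_one (h : ∀ z : m → ℂ, ‖z‖ = 1 → κ ≤ ‖A *ᵥ z‖) :
    BoundedBelow κ A := fun z => by
  rcases eq_or_ne z 0 with rfl | hz
  · simp
  have hnorm : 0 < ‖z‖ := norm_pos_iff.2 hz
  have hunit := h ((‖z‖⁻¹ : ℂ) • z) (by simp [norm_smul, hnorm.ne'])
  rw [mulVec_smul, norm_smul, norm_inv, Complex.norm_real, norm_norm, inv_mul_eq_div,
    le_div_iff₀ hnorm] at hunit
  exact hunit

lemma isClosed_setOf_boundedBelow (κ : ℝ) : IsClosed {A : Matrix m m ℂ | BoundedBelow κ A} := by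
  simp only [BoundedBelow, Set.ofPred_forall]
  exact isClosed_iInter fun z => isClosed_le continuous_const (by fun_prop)

variable [DecidableEq m]

lemma BoundedBelow.isUnit (h : BoundedBelow κ A) (hκ : 0 < κ) : IsUnit A := by
  rw [← mulVec_injective_iff_isUnit]
  refine (injective_iff_map_eq_zero (mulVecLin A)).2 fun z hz => ?_
  have hle := h z
  rw [← mulVecLin_apply, hz, norm_zero] at hle
  exact norm_le_zero_iff.1 (nonpos_of_mul_nonpos_right hle hκ)

lemma BoundedBelow.norm_inv_le (h : BoundedBelow κ A) (hκ : 0 < κ) : ‖A⁻¹‖ ≤ κ⁻¹ := by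
  rw [linfty_opNorm_eq_opNorm]
  refine ContinuousLinearMap.opNorm_le_bound _ (by positivity) fun v => ?_
  have hle := h (A⁻¹ *ᵥ v)
  rw [mulVec_mulVec, mul_nonsing_inv _ ((isUnit_iff_isUnit_det A).1 (h.isUnit hκ)),
    one_mulVec] at hle
  rwa [inv_mul_eq_div, le_div_iff₀' hκ]

lemma boundedBelow_of_norm_inv_le (hκ : 0 < κ) (hA : IsUnit A) (h : ‖A⁻¹‖ ≤ κ⁻¹) :
    BoundedBelow κ A := fun z => by
  have hle := (linfty_opNorm_mulVec A⁻¹ (A *ᵥ z)).trans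
    (mul_le_mul_of_nonneg_right h (norm_nonneg _))
  rwa [mulVec_mulVec, nonsing_inv_mul _ ((isUnit_iff_isUnit_det A).1 hA), one_mulVec,
    inv_mul_eq_div, le_div_iff₀' hκ] at hle

end BoundedBelow

section Continuation

open scoped Matrix.Norms.Operator

variable {m : Type*} [Fintype m] {κ κ' : ℝ}

lemma continuousAt_matrix_inv [DecidableEq m] {A : Matrix m m ℂ} (hA : IsUnit A) :
    ContinuousAt (fun B : Matrix m m ℂ => B⁻¹) A := by
  rw [show (fun B : Matrix m m ℂ => B⁻¹) = Ring.inverse from funext nonsing_inv_eq_ringInverse]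
  obtain ⟨u, rfl⟩ := hA
  exact NormedRing.inverse_continuousAt u

lemma differentiableAt_matrix_inv [DecidableEq m] {A : Matrix m m ℂ} (hA : IsUnit A) :
    DifferentiableAt ℂ (fun B : Matrix m m ℂ => B⁻¹) A := by
  rw [show (fun B : Matrix m m ℂ => B⁻¹) = Ring.inverse from funext nonsing_inv_eq_ringInverse]
  exact differentiableAt_inverse hA

lemma diffContOnCl_matrix_inv [DecidableEq m] {U : Set ℂ} {A : ℂ → Matrix m m ℂ}
    (hA : DiffContOnCl ℂ A U) (hunit : ∀ s ∈ closure U, IsUnit (A s)) :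
    DiffContOnCl ℂ (fun s => (A s)⁻¹) U where
  differentiableOn s hs :=
    (differentiableAt_matrix_inv (hunit s (subset_closure hs))).comp_differentiableWithinAt s
      (hA.differentiableOn s hs)
  continuousOn s hs :=
    (continuousAt_matrix_inv (hunit s hs)).comp_continuousWithinAt (hA.continuousOn s hs)

lemma boundedBelow_of_boundedBelow_jw {A : ℂ → Matrix m m ℂ}
    (hA : DiffContOnCl ℂ A {s | 0 < s.re}) (hκ : 0 < κ) (hκ' : 0 < κ')
    (hcl : ∀ s : ℂ, 0 ≤ s.re → BoundedBelow κ' (A s)) (haxis : ∀ ω, BoundedBelow κ (A (jw ω)))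
    {s : ℂ} (hs : 0 ≤ s.re) : BoundedBelow κ (A s) := by
  classical
  refine boundedBelow_of_norm_inv_le hκ ((hcl s hs).isUnit hκ') ?_
  have hinv : DiffContOnCl ℂ (fun s => (A s)⁻¹) {s | 0 < s.re} := by
    refine diffContOnCl_matrix_inv hA fun s hs => (hcl s ?_).isUnit hκ'
    rwa [Complex.closure_setOfPred_lt_re] at hs
  refine PhragmenLindelof.right_half_plane_of_bounded_on_real hinv ⟨1, by norm_num, 0, ?_⟩
    ⟨κ'⁻¹, ?_⟩ (fun ω => ?_) hs
  · refine Asymptotics.IsBigO.of_bound κ'⁻¹ (eventually_inf_principal.2 ?_)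
    exact Eventually.of_forall fun s hs => by simpa using (hcl s (le_of_lt hs)).norm_inv_le hκ'
  · rw [eventually_map]
    filter_upwards [eventually_ge_atTop 0] with x hx
    exact (hcl x (by simpa using hx)).norm_inv_le hκ'
  · rw [mul_comm]
    exact (haxis ω).norm_inv_le hκ

/-- Two uniformly close members of the family are bounded below together: the perturbation costs
half of `κ`, which the Phragmén–Lindelöf principle restores from the imaginary axis. -/
lemma boundedBelow_of_isPreconnected {ι : Type*} [TopologicalSpace ι] {T : Set ι}
    (hT : IsPreconnected T) {A : ι → ℂ → Matrix m m ℂ}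
    (hA : ∀ i ∈ T, DiffContOnCl ℂ (A i) {s | 0 < s.re})
    (hunif : ∀ i ∈ T, TendstoUniformlyOn A (A i) (𝓝[T] i) {s | 0 ≤ s.re}) (hκ : 0 < κ)
    (haxis : ∀ i ∈ T, ∀ ω, BoundedBelow κ (A i (jw ω))) {i₀ : ι} (hi₀ : i₀ ∈ T) (hκ' : 0 < κ')
    (h₀ : ∀ s : ℂ, 0 ≤ s.re → BoundedBelow κ' (A i₀ s)) {i : ι} (hi : i ∈ T) {s : ℂ}
    (hs : 0 ≤ s.re) : BoundedBelow κ (A i s) := by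
  have of_close {i j : ι} (hj : j ∈ T) (hij : ∀ s : ℂ, 0 ≤ s.re → ‖A i s - A j s‖ ≤ κ / 2)
      (h : ∀ s : ℂ, 0 ≤ s.re → BoundedBelow κ (A i s)) :
      ∀ s : ℂ, 0 ≤ s.re → BoundedBelow κ (A j s) := fun s hs => by
    refine boundedBelow_of_boundedBelow_jw (hA j hj) hκ (half_pos hκ) (fun s hs => ?_)
      (haxis j hj) hs
    simpa only [sub_half] using (h s hs).sub_norm (hij s hs)
  have hiff : (∀ s : ℂ, 0 ≤ s.re → BoundedBelow κ (A i₀ s)) ↔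
      ∀ s : ℂ, 0 ≤ s.re → BoundedBelow κ (A i s) := by
    refine hT.induction₂ (fun i j => (∀ s : ℂ, 0 ≤ s.re → BoundedBelow κ (A i s)) ↔
      ∀ s : ℂ, 0 ≤ s.re → BoundedBelow κ (A j s)) (fun i hi => ?_)
      (fun _ _ _ _ _ _ => Iff.trans) (fun _ _ _ _ => Iff.symm) hi₀ hi
    filter_upwards [Metric.tendstoUniformlyOn_iff.1 (hunif i hi) (κ / 2) (half_pos hκ),
      self_mem_nhdsWithin] with j hij hj
    refine ⟨of_close hj fun s hs => ?_, of_close hi fun s hs => ?_⟩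
    · exact (dist_eq_norm (A i s) _ ▸ hij s hs).le
    · exact (dist_eq_norm' (A i s) _ ▸ hij s hs).le
  exact hiff.1 (fun _ => boundedBelow_of_boundedBelow_jw (hA i₀ hi₀) hκ hκ' h₀ (haxis i₀ hi₀)) s hs

end Continuation

section HermitianForm

variable {m : Type*} [Fintype m]

/-- The sesquilinear form of `M` on the diagonal, `x* M x`. -/
def hermForm (M : Matrix m m ℂ) (x : m → ℂ) : ℂ :=
  star x ⬝ᵥ M *ᵥ x

lemma hermForm_sub (M N : Matrix m m ℂ) (x : m → ℂ) :
    hermForm (M - N) x = hermForm M x - hermForm N x := by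
  rw [hermForm, sub_mulVec, dotProduct_sub, hermForm, hermForm]

lemma hermForm_smul (c : ℂ) (M : Matrix m m ℂ) (x : m → ℂ) :
    hermForm (c • M) x = c * hermForm M x := by
  rw [hermForm, smul_mulVec, dotProduct_smul, smul_eq_mul, hermForm]

lemma hermForm_conjTranspose (M : Matrix m m ℂ) (x : m → ℂ) :
    hermForm Mᴴ x = star (hermForm M x) := by
  rw [hermForm, star_dotProduct, star_mulVec, conjTranspose_conjTranspose, hermForm,
    dotProduct_mulVec]

lemma hermForm_map_star (M : Matrix m m ℂ) (x : m → ℂ) :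
    hermForm (M.map star) x = star (hermForm M (star x)) := by
  simp [hermForm, dotProduct, mulVec]

lemma continuous_hermForm :
    Continuous fun p : Matrix m m ℂ × (m → ℂ) => hermForm p.1 p.2 := by
  unfold hermForm
  fun_prop

lemma norm_dotProduct_le (x y : m → ℂ) : ‖star x ⬝ᵥ y‖ ≤ Fintype.card m * (‖x‖ * ‖y‖) := by
  have hterm : ∀ i ∈ Finset.univ, ‖star x i * y i‖ ≤ ‖x‖ * ‖y‖ := fun i _ => by
    rw [norm_mul, Pi.star_apply, norm_star]
    exact mul_le_mul (norm_le_pi_norm x i) (norm_le_pi_norm y i) (norm_nonneg _) (norm_nonneg _)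
  simpa [dotProduct] using norm_sum_le_of_le _ hterm

/-- The imaginary parts of `x* y` and `y* x` cancel, which eliminates `Q` from the residuals
`x - Q y` and `y - C x`. -/
lemma neg_im_hermForm_le {Q C : Matrix m m ℂ} (hQ : ∀ y, (hermForm Q y).im ≤ 0)
    (x y : m → ℂ) :
    -(hermForm C x).im ≤
      Fintype.card m * (‖y‖ * ‖x - Q *ᵥ y‖) + Fintype.card m * (‖x‖ * ‖y - C *ᵥ x‖) := by
  have hx : (star x ⬝ᵥ y).im = (hermForm C x).im + (star x ⬝ᵥ (y - C *ᵥ x)).im := by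
    rw [dotProduct_sub, Complex.sub_im, hermForm]
    ring
  have hy : (star y ⬝ᵥ x).im = (hermForm Q y).im + (star y ⬝ᵥ (x - Q *ᵥ y)).im := by
    rw [dotProduct_sub, Complex.sub_im, hermForm]
    ring
  have hconj : (star y ⬝ᵥ x).im = -(star x ⬝ᵥ y).im := by
    rw [star_dotProduct]
    exact Complex.conj_im _
  have hu := (Complex.im_le_norm _).trans (norm_dotProduct_le y (x - Q *ᵥ y))
  have hv := (Complex.im_le_norm _).trans (norm_dotProduct_le x (y - C *ᵥ x))
  linarith [hQ y]

lemma exists_pos_le_norm_sub_im_hermForm {K : Set (Matrix m m ℂ)} (hK : IsCompact K)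
    (hneg : ∀ C ∈ K, ∀ x ≠ 0, (hermForm C x).im < 0) :
    ∃ c > 0, ∀ C ∈ K, ∀ x y : m → ℂ, max ‖x‖ ‖y‖ = 1 →
      c ≤ ‖y - C *ᵥ x‖ - (hermForm C x).im := by
  let residual (p : Matrix m m ℂ × (m → ℂ) × (m → ℂ)) : ℝ :=
    ‖p.2.2 - p.1 *ᵥ p.2.1‖ - (hermForm p.1 p.2.1).im
  have hcont : Continuous residual :=
    (continuous_snd.snd.sub (continuous_fst.matrix_mulVec continuous_snd.fst)).norm.sub
      (Complex.continuous_im.comp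
        (continuous_hermForm.comp (continuous_fst.prodMk continuous_snd.fst)))
  have hpos : ∀ p ∈ K ×ˢ Metric.sphere 0 1, 0 < residual p := by
    rintro ⟨C, x, y⟩ ⟨hC, hxy⟩
    rcases eq_or_ne x 0 with rfl | hx
    · have hy : ‖y‖ = 1 := by simpa [Prod.norm_def] using hxy
      simp [residual, hermForm, hy]
    · exact sub_pos.2 ((hneg C hC x hx).trans_le (norm_nonneg _))
  obtain ⟨c, hc, hle⟩ := (hK.prod (isCompact_sphere _ _)).exists_forall_le' hcont.continuousOn hpos
  exact ⟨c, hc, fun C hC x y hxy => hle (C, x, y) ⟨hC, by simpa [Prod.norm_def] using hxy⟩⟩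

end HermitianForm

section FeedbackLoop

variable {m R : Type*} [DecidableEq m]

/-- The return difference of the positive feedback loop of `Q` and `C`: it maps the loop signals
to the external inputs, and its inverse is the closed loop up to a constant. -/
def loopMatrix [Ring R] (Q C : Matrix m m R) : Matrix (m ⊕ m) (m ⊕ m) R :=
  fromBlocks 1 (-Q) (-C) 1

lemma continuous_loopMatrix [Ring R] [TopologicalSpace R] [IsTopologicalRing R] :
    Continuous fun p : Matrix m m R × Matrix m m R => loopMatrix p.1 p.2 :=
  Continuous.matrix_fromBlocks continuous_const continuous_fst.neg continuous_snd.neg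
    continuous_const

lemma tendsto_loopMatrix [Ring R] [TopologicalSpace R] [IsTopologicalRing R] {ι : Type*}
    {l : Filter ι} {Q C : ι → Matrix m m R} {Q₀ C₀ : Matrix m m R} (hQ : Tendsto Q l (𝓝 Q₀))
    (hC : Tendsto C l (𝓝 C₀)) :
    Tendsto (fun i => loopMatrix (Q i) (C i)) l (𝓝 (loopMatrix Q₀ C₀)) :=
  (continuous_loopMatrix.tendsto (Q₀, C₀)).comp (hQ.prodMk_nhds hC)

lemma loopMatrix_map_star (Q C : Matrix m m ℂ) :
    loopMatrix (Q.map star) (C.map star) = (loopMatrix Q C).map star := by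
  rw [loopMatrix, loopMatrix, fromBlocks_map, Matrix.map_one _ (star_zero ℂ) (star_one ℂ)]
  rfl

variable [Fintype m]

lemma det_loopMatrix [CommRing R] (Q C : Matrix m m R) :
    (loopMatrix Q C).det = (1 - Q * C).det := by
  simp [loopMatrix, det_fromBlocks_one₂₂]

lemma mul_loopMatrix_eq_one [Ring R] {Q C X : Matrix m m R} (hX : X * (1 - Q * C) = 1) :
    fromBlocks X (X * Q) (C * X) (C * X * Q + 1) * loopMatrix Q C = 1 := by
  have hX' : X - X * Q * C = 1 := by rw [← hX]; noncomm_ring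
  have hCX : C * X * 1 + (C * X * Q + 1) * -C = 0 := by
    calc C * X * 1 + (C * X * Q + 1) * -C = C * (X - X * Q * C) - C := by noncomm_ring
      _ = 0 := by rw [hX', Matrix.mul_one, sub_self]
  rw [loopMatrix, fromBlocks_multiply, hCX, ← fromBlocks_one]
  congr 1
  · refine Eq.trans ?_ hX'
    noncomm_ring
  · noncomm_ring
  · noncomm_ring

lemma loopMatrix_mulVec_sumElim [Ring R] (Q C : Matrix m m R) (x y : m → R) :
    loopMatrix Q C *ᵥ Sum.elim x y = Sum.elim (x - Q *ᵥ y) (y - C *ᵥ x) := by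
  rw [loopMatrix, fromBlocks_mulVec]
  simp [neg_mulVec, sub_eq_add_neg, add_comm]

end FeedbackLoop

section LoopBounds

open scoped Matrix.Norms.Operator

variable {m : Type*} [Fintype m]

lemma norm_sumElim (x y : m → ℂ) : ‖Sum.elim x y‖ = max ‖x‖ ‖y‖ := by
  refine le_antisymm ?_ (max_le ?_ ?_)
  · refine (pi_norm_le_iff_of_nonneg (by positivity)).2 (Sum.rec (fun i => ?_) fun i => ?_)
    · exact (norm_le_pi_norm x i).trans (le_max_left _ _)
    · exact (norm_le_pi_norm y i).trans (le_max_right _ _)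
  · exact (pi_norm_le_iff_of_nonneg (norm_nonneg _)).2 fun i =>
      norm_le_pi_norm (Sum.elim x y) (Sum.inl i)
  · exact (pi_norm_le_iff_of_nonneg (norm_nonneg _)).2 fun i =>
      norm_le_pi_norm (Sum.elim x y) (Sum.inr i)

variable [DecidableEq m]

lemma boundedBelow_loopMatrix_zero {C : Matrix m m ℂ} {B : ℝ} (hC : ‖C‖ ≤ B) :
    BoundedBelow (1 + B)⁻¹ (loopMatrix 0 C) := fun z => by
  obtain ⟨x, y, rfl⟩ : ∃ x y, z = Sum.elim x y := ⟨_, _, (Sum.elim_comp_inl_inr z).symm⟩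
  have hB : 0 ≤ B := (norm_nonneg C).trans hC
  have hCx : ‖C *ᵥ x‖ ≤ B * ‖x‖ :=
    (linfty_opNorm_mulVec C x).trans (mul_le_mul_of_nonneg_right hC (norm_nonneg x))
  have hy : ‖y‖ ≤ ‖C *ᵥ x‖ + ‖y - C *ᵥ x‖ := norm_le_norm_add_norm_sub' y (C *ᵥ x)
  rw [loopMatrix_mulVec_sumElim, zero_mulVec, sub_zero, inv_mul_le_iff₀ (by positivity),
    norm_sumElim, norm_sumElim]
  set w := max ‖x‖ ‖y - C *ᵥ x‖
  have hxw : ‖x‖ ≤ w := le_max_left _ _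
  have hyw : ‖y - C *ᵥ x‖ ≤ w := le_max_right _ _
  have hBw : B * ‖x‖ ≤ B * w := mul_le_mul_of_nonneg_left hxw hB
  refine max_le ?_ ?_ <;> nlinarith [norm_nonneg x]

lemma exists_boundedBelow_loopMatrix_of_im_neg {K : Set (Matrix m m ℂ)} (hK : IsCompact K)
    (hneg : ∀ C ∈ K, ∀ x ≠ 0, (hermForm C x).im < 0) :
    ∃ κ > 0, ∀ C ∈ K, ∀ Q : Matrix m m ℂ, (∀ y, (hermForm Q y).im ≤ 0) →
      BoundedBelow κ (loopMatrix Q C) := by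
  obtain ⟨c, hc, hle⟩ := exists_pos_le_norm_sub_im_hermForm hK hneg
  refine ⟨c / (1 + 2 * Fintype.card m), by positivity, fun C hC Q hQ =>
    boundedBelow_of_forall_norm_eq_one fun z hz => ?_⟩
  obtain ⟨x, y, rfl⟩ : ∃ x y, z = Sum.elim x y := ⟨_, _, (Sum.elim_comp_inl_inr z).symm⟩
  rw [norm_sumElim] at hz
  rw [loopMatrix_mulVec_sumElim, norm_sumElim, div_le_iff₀ (by positivity)]
  set w := max ‖x - Q *ᵥ y‖ ‖y - C *ᵥ x‖
  have hu : ‖y‖ * ‖x - Q *ᵥ y‖ ≤ 1 * w :=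
    mul_le_mul (hz ▸ le_max_right _ _) (le_max_left _ _) (norm_nonneg _) zero_le_one
  have hv : ‖x‖ * ‖y - C *ᵥ x‖ ≤ 1 * w :=
    mul_le_mul (hz ▸ le_max_left _ _) (le_max_right _ _) (norm_nonneg _) zero_le_one
  have hvw : ‖y - C *ᵥ x‖ ≤ w := le_max_right _ _
  calc c ≤ ‖y - C *ᵥ x‖ + -(hermForm C x).im := by
        rw [← sub_eq_add_neg]
        exact hle C hC x y hz
    _ ≤ w + (Fintype.card m * (1 * w) + Fintype.card m * (1 * w)) :=
        add_le_add hvw ((neg_im_hermForm_le hQ x y).trans (by gcongr))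
    _ = w * (1 + 2 * Fintype.card m) := by ring

lemma exists_eventually_boundedBelow {X T : Type*} [TopologicalSpace X] [TopologicalSpace T]
    {K : Set T} (hK : IsCompact K) {F : X × T → Matrix m m ℂ} (hF : Continuous F) {x : X}
    (hdet : ∀ t ∈ K, (F (x, t)).det ≠ 0) :
    ∃ κ > 0, ∀ᶠ x' in 𝓝 x, ∀ t ∈ K, BoundedBelow κ (F (x', t)) := by
  have hcont : Continuous fun q : X × (T × (m → ℂ)) => ‖F (q.1, q.2.1) *ᵥ q.2.2‖ :=
    ((hF.comp (by fun_prop)).matrix_mulVec (by fun_prop)).norm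
  have hS : IsCompact (K ×ˢ Metric.sphere (0 : m → ℂ) 1) := hK.prod (isCompact_sphere _ _)
  have hpos : ∀ q ∈ K ×ˢ Metric.sphere (0 : m → ℂ) 1, 0 < ‖F (x, q.1) *ᵥ q.2‖ := by
    rintro ⟨t, z⟩ ⟨ht, hz⟩
    refine norm_pos_iff.2 fun hzero => ?_
    rw [eq_zero_of_mulVec_eq_zero (hdet t ht) hzero] at hz
    simp at hz
  obtain ⟨c, hc, hle⟩ := hS.exists_forall_le'
    (hcont.comp (by fun_prop : Continuous fun q : T × (m → ℂ) => (x, q))).continuousOn hpos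
  refine ⟨c / 2, half_pos hc, ?_⟩
  have hnear := hS.eventually_forall_of_forall_eventually (x₀ := x)
    (P := fun x' q => c / 2 < ‖F (x', q.1) *ᵥ q.2‖) fun q hq =>
      (hcont.tendsto (x, q)).eventually (lt_mem_nhds ((half_lt_self hc).trans_le (hle q hq)))
  filter_upwards [hnear] with x' hx' t ht
  exact boundedBelow_of_forall_norm_eq_one fun z hz => (hx' (t, z) ⟨ht, by simpa using hz⟩).le

lemma exists_eventually_boundedBelow_loopMatrix {X Y : Matrix m m ℂ}
    (hdet : ∀ τ ∈ Set.Icc (0 : ℝ) 1, (loopMatrix ((τ : ℂ) • X) Y).det ≠ 0) :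
    ∃ κ > 0, ∀ᶠ p in 𝓝 (X, Y), ∀ τ ∈ Set.Icc (0 : ℝ) 1,
      BoundedBelow κ (loopMatrix ((τ : ℂ) • p.1) p.2) :=
  exists_eventually_boundedBelow isCompact_Icc
    (F := fun q : (Matrix m m ℂ × Matrix m m ℂ) × ℝ => loopMatrix ((q.2 : ℂ) • q.1.1) q.1.2)
    (continuous_loopMatrix.comp (f := fun q : (Matrix m m ℂ × Matrix m m ℂ) × ℝ =>
      ((q.2 : ℂ) • q.1.1, q.1.2)) (by fun_prop)) hdet

lemma exists_eventually_boundedBelow_axis {ι : Type*} {l : Filter ι} {Q : ι → ℝ → Matrix m m ℂ}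
    {C : ℝ → Matrix m m ℂ} {Q₀ Q₁ C₁ : Matrix m m ℂ} (hC : ContinuousOn C (Set.Ici 0))
    (hC_top : Tendsto C atTop (𝓝 C₁))
    (hQ_zero : Tendsto (Function.uncurry Q) (l ×ˢ 𝓝[≥] 0) (𝓝 Q₀))
    (hQ_top : Tendsto (Function.uncurry Q) (l ×ˢ atTop) (𝓝 Q₁))
    (hCneg : ∀ ω > 0, ∀ x ≠ 0, (hermForm (C ω) x).im < 0)
    (hQneg : ∀ᶠ i in l, ∀ ω > 0, ∀ x, (hermForm (Q i ω) x).im ≤ 0)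
    (hdet₀ : ∀ τ ∈ Set.Icc (0 : ℝ) 1, (loopMatrix ((τ : ℂ) • Q₀) (C 0)).det ≠ 0)
    (hdet₁ : ∀ τ ∈ Set.Icc (0 : ℝ) 1, (loopMatrix ((τ : ℂ) • Q₁) C₁).det ≠ 0) :
    ∃ κ > 0, ∀ᶠ i in l, ∀ τ ∈ Set.Icc (0 : ℝ) 1, ∀ ω ≥ 0,
      BoundedBelow κ (loopMatrix ((τ : ℂ) • Q i ω) (C ω)) := by
  obtain ⟨κ₀, hκ₀, hnear₀⟩ := exists_eventually_boundedBelow_loopMatrix hdet₀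
  obtain ⟨κ₁, hκ₁, hnear₁⟩ := exists_eventually_boundedBelow_loopMatrix hdet₁
  have hC_zero : Tendsto C (𝓝[≥] 0) (𝓝 (C 0)) := hC 0 Set.self_mem_Ici
  obtain ⟨p₀, hp₀, q₀, hq₀, hlow⟩ := eventually_prod_iff.1
    ((hQ_zero.prodMk_nhds (hC_zero.comp tendsto_snd)).eventually hnear₀)
  obtain ⟨p₁, hp₁, q₁, hq₁, hhigh⟩ := eventually_prod_iff.1
    ((hQ_top.prodMk_nhds (hC_top.comp tendsto_snd)).eventually hnear₁)
  obtain ⟨a, ha, hlow_ω⟩ := mem_nhdsGE_iff_exists_Ico_subset.1 hq₀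
  obtain ⟨b, hhigh_ω⟩ := eventually_atTop.1 hq₁
  have ha0 : 0 < a := ha
  obtain ⟨κ₂, hκ₂, hmid⟩ := exists_boundedBelow_loopMatrix_of_im_neg
    (isCompact_Icc.image_of_continuousOn (hC.mono fun ω hω => ha0.le.trans hω.1))
    (K := C '' Set.Icc a b) (by
      rintro _ ⟨ω, hω, rfl⟩
      exact hCneg ω (ha0.trans_le hω.1))
  refine ⟨min κ₀ (min κ₁ κ₂), by positivity, ?_⟩
  filter_upwards [hp₀, hp₁, hQneg] with i hi₀ hi₁ hi τ hτ ω hω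
  rcases lt_or_ge ω a with hωa | haω
  · exact (hlow hi₀ (hlow_ω ⟨hω, hωa⟩) τ hτ).mono (min_le_left _ _)
  rcases le_total b ω with hbω | hωb
  · exact (hhigh hi₁ (hhigh_ω ω hbω) τ hτ).mono ((min_le_right _ _).trans (min_le_left _ _))
  · refine (hmid _ ⟨ω, ⟨haω, hωb⟩, rfl⟩ _ fun y => ?_).mono
      ((min_le_right _ _).trans (min_le_right _ _))
    rw [hermForm_smul, Complex.im_ofReal_mul]
    exact mul_nonpos_of_nonneg_of_nonpos hτ.1 (hi ω (ha0.trans_le haω) y)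

end LoopBounds

section HalfPlane

lemma jw_re (ω : ℝ) : (jw ω).re = 0 := by
  simp [jw]

lemma jw_im (ω : ℝ) : (jw ω).im = ω := by
  simp [jw]

lemma jw_zero : jw 0 = 0 := by
  simp [jw]

lemma jw_injective : Function.Injective jw :=
  Function.LeftInverse.injective jw_im

lemma jw_im_of_re_eq_zero {s : ℂ} (hs : s.re = 0) : jw s.im = s :=
  Complex.ext ((jw_re _).trans hs.symm) (jw_im _)

lemma star_jw (ω : ℝ) : star (jw ω) = jw (-ω) :=
  Complex.ext (by simp [jw]) (by simp [jw])

lemma continuous_jw : Continuous jw :=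
  continuous_const.mul Complex.continuous_ofReal

lemma tendsto_jw_atTop : Tendsto jw atTop (Bornology.cobounded ℂ) := by
  refine tendsto_norm_atTop_iff_cobounded.1 ?_
  simpa [jw] using tendsto_abs_atTop_atTop

lemma continuousAt_re_of_differentiableOn {g : ℂ → ℂ} (hg : DifferentiableOn ℂ g {s | 0 < s.re})
    {s : ℂ} (hs : 0 < s.re) : ContinuousAt (fun z => (g z).re) s :=
  Complex.continuous_re.continuousAt.comp
    (hg.differentiableAt
      ((isOpen_lt continuous_const Complex.continuous_re).mem_nhds hs)).continuousAt

lemma isCompact_setOf_re_le {g : ℂ → ℂ} (hg : DifferentiableOn ℂ g {s | 0 < s.re})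
    (haxis : ∀ s : ℂ, s.re = 0 → ∀ ε > 0, ∀ᶠ z in 𝓝[{s | 0 < s.re}] s, -ε ≤ (g z).re)
    (hinf : Tendsto g (Bornology.cobounded ℂ) (𝓝 0)) {v : ℝ} (hv : v < 0) :
    IsCompact {s : ℂ | 0 < s.re ∧ (g s).re ≤ v} := by
  refine Metric.isCompact_of_isClosed_isBounded (isClosed_of_closure_subset fun s hs => ?_) ?_
  · have hfreq := mem_closure_iff_frequently.1 hs
    have hs0 : 0 ≤ s.re :=
      closure_minimal (fun z hz => le_of_lt hz.1)
        (isClosed_le continuous_const Complex.continuous_re) hs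
    rcases hs0.eq_or_lt with hzero | hpos
    · refine absurd (eventually_nhdsWithin_iff.1 (haxis s hzero.symm (-v / 2) (by linarith)))
        fun hev => ?_
      obtain ⟨z, ⟨hz, hzv⟩, hle⟩ := (hfreq.and_eventually hev).exists
      linarith [hle hz]
    · refine ⟨hpos, le_of_not_gt fun hlt => ?_⟩
      obtain ⟨z, ⟨-, hzv⟩, hz⟩ := (hfreq.and_eventually
        ((continuousAt_re_of_differentiableOn hg hpos).eventually_const_lt hlt)).exists
      exact hz.not_ge hzv
  · have hre : Tendsto (fun s => (g s).re) (Bornology.cobounded ℂ) (𝓝 0) :=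
      (Complex.continuous_re.tendsto 0).comp hinf
    refine Bornology.isBounded_def.2 ?_
    filter_upwards [hre.eventually_const_lt hv] with s hs hmem
    exact hs.not_ge hmem.2

/-- The minimum principle for the real part, applied to `exp ∘ (-g)`. -/
lemma re_nonneg_of_re_nonneg_frontier {g : ℂ → ℂ} (hg : DifferentiableOn ℂ g {s | 0 < s.re})
    (haxis : ∀ s : ℂ, s.re = 0 → ∀ ε > 0, ∀ᶠ z in 𝓝[{s | 0 < s.re}] s, -ε ≤ (g z).re)
    (hinf : Tendsto g (Bornology.cobounded ℂ) (𝓝 0)) {s : ℂ} (hs : 0 < s.re) : 0 ≤ (g s).re := by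
  by_contra! hneg
  have hcont : ContinuousOn (fun z => (g z).re) {z : ℂ | 0 < z.re ∧ (g z).re ≤ (g s).re} :=
    fun z hz => (continuousAt_re_of_differentiableOn hg hz.1).continuousWithinAt
  obtain ⟨z₀, ⟨hz₀, hz₀s⟩, hmin⟩ :=
    (isCompact_setOf_re_le hg haxis hinf hneg).exists_isMinOn ⟨s, hs, le_rfl⟩ hcont
  have hle : ∀ z : ℂ, 0 < z.re → (g z₀).re ≤ (g z).re := fun z hz =>
    (le_total (g z).re (g s).re).elim (fun h => hmin ⟨hz, h⟩) fun h => hz₀s.trans h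
  have hmax : IsMaxOn (norm ∘ fun z => Complex.exp (-g z)) {z : ℂ | 0 < z.re} z₀ := fun z hz => by
    simpa [Complex.norm_exp] using hle z hz
  have hconst : ∀ x > 0, (g (x : ℝ)).re = (g z₀).re := fun x hx => by
    have hnorm := Complex.norm_eqOn_of_isPreconnected_of_isMaxOn
      (convex_halfSpace_re_gt 0).isPreconnected
      (isOpen_lt continuous_const Complex.continuous_re) hg.neg.cexp hz₀ hmax
      (show (x : ℂ) ∈ {z : ℂ | 0 < z.re} by simpa using hx)
    simpa [Complex.norm_exp] using hnorm
  have hlim : Tendsto (fun x : ℝ => (g x).re) atTop (𝓝 0) :=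
    (Complex.continuous_re.tendsto 0).comp
      (hinf.comp (tendsto_norm_atTop_iff_cobounded.1 (by simpa using tendsto_abs_atTop_atTop)))
  have hzero : (g z₀).re = 0 := tendsto_nhds_unique
    (tendsto_const_nhds.congr' ((eventually_gt_atTop 0).mono fun x hx => (hconst x hx).symm)) hlim
  exact hneg.not_ge (hzero ▸ hz₀s)

lemma exists_continuousAt_eq_add_residue_mul_inv {g : ℂ → ℂ} {s r : ℂ}
    (hg : ∀ᶠ z in 𝓝[≠] s, DifferentiableAt ℂ g z)
    (hres : Tendsto (fun z => (z - s) * g z) (𝓝[≠] s) (𝓝 r)) :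
    ∃ d : ℂ → ℂ, ContinuousAt d s ∧ ∀ z ≠ s, g z = d z + r * (z - s)⁻¹ := by
  let h : ℂ → ℂ := Function.update (fun z => (z - s) * g z) s r
  have hdiff : ∀ᶠ z in 𝓝[≠] s, DifferentiableAt ℂ h z := by
    filter_upwards [hg, self_mem_nhdsWithin] with z hz hzs
    refine DifferentiableAt.congr_of_eventuallyEq (f := fun z => (z - s) * g z) (by fun_prop) ?_
    filter_upwards [isOpen_ne.mem_nhds hzs] with w hw using Function.update_of_ne hw _ _
  have hanalytic : AnalyticAt ℂ h s :=
    Complex.analyticAt_of_differentiable_on_punctured_nhds_of_continuousAt hdiff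
      (continuousAt_update_same.2 hres)
  refine ⟨dslope h s, continuousAt_dslope_same.2 hanalytic.differentiableAt, fun z hz => ?_⟩
  have hsub : z - s ≠ 0 := sub_ne_zero.2 hz
  have hz_val : h z = (z - s) * g z := Function.update_of_ne hz _ _
  have hs_val : h s = r := Function.update_self ..
  rw [dslope_of_ne _ hz, slope_def_field, hz_val, hs_val]
  field_simp
  ring

/-- Subtracting the pole `r / (z - s)`, whose real part is nonnegative in the half-plane and zero
on the axis, leaves a function that is continuous at `s`. -/
lemma eventually_neg_le_re_of_residue_nonneg {g : ℂ → ℂ} {s : ℂ} (hs : s.re = 0) {r : ℝ}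
    (hr : 0 ≤ r) (hg : ∀ᶠ z in 𝓝[≠] s, DifferentiableAt ℂ g z)
    (hres : Tendsto (fun z => (z - s) * g z) (𝓝[≠] s) (𝓝 (r : ℂ)))
    (haxis : ∀ᶠ ω in 𝓝[>] s.im, 0 ≤ (g (jw ω)).re) {ε : ℝ} (hε : 0 < ε) :
    ∀ᶠ z in 𝓝[{s | 0 < s.re}] s, -ε ≤ (g z).re := by
  obtain ⟨d, hd, hg_eq⟩ := exists_continuousAt_eq_add_residue_mul_inv hg hres
  have hd_re : ContinuousAt (fun z => (d z).re) s := Complex.continuous_re.continuousAt.comp hd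
  have hre {z : ℂ} (hz : z ≠ s) :
      (g z).re = (d z).re + r * ((z - s).re / Complex.normSq (z - s)) := by
    rw [hg_eq z hz, Complex.add_re, Complex.re_ofReal_mul, Complex.inv_re]
  have hlimit : 0 ≤ (d s).re := by
    have hjw : Tendsto jw (𝓝[>] s.im) (𝓝 s) :=
      (continuous_jw.tendsto' _ _ (jw_im_of_re_eq_zero hs)).mono_left nhdsWithin_le_nhds
    refine ge_of_tendsto (hd_re.tendsto.comp hjw) ?_
    filter_upwards [haxis, self_mem_nhdsWithin] with ω hω hgt
    have hne : jw ω ≠ s := fun heq => (Set.mem_Ioi.1 hgt).ne (by rw [← heq, jw_im])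
    rw [hre hne, Complex.sub_re, jw_re, hs] at hω
    simpa using hω
  filter_upwards [nhdsWithin_le_nhds (hd_re.eventually_const_lt (show -ε < _ by linarith)),
    self_mem_nhdsWithin] with z hzε hz
  have hz' : 0 < z.re := hz
  have hne : z ≠ s := fun heq => hz'.ne' (heq ▸ hs)
  have hpole : 0 ≤ r * ((z - s).re / Complex.normSq (z - s)) :=
    mul_nonneg hr (div_nonneg (by rw [Complex.sub_re, hs, sub_zero]; exact hz'.le)
      (Complex.normSq_nonneg _))
  linarith [hre hne]

end HalfPlane

section NegativeImaginary

variable {G : Matrix (Fin n) (Fin n) (RatFunc ℝ)}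

lemma hermForm_niKer (M : Matrix (Fin n) (Fin n) ℂ) (x : Fin n → ℂ) :
    hermForm (niKer M) x = ((-2 * (hermForm M x).im : ℝ) : ℂ) := by
  rw [niKer, hermForm_smul, hermForm_sub, hermForm_conjTranspose]
  apply Complex.ext <;> simp
  ring

lemma IsNI.im_hermForm_nonpos (hG : IsNI G) {ω : ℝ} (hω : 0 < ω) (hreg : ¬ HasPole G (jw ω))
    (x : Fin n → ℂ) : (hermForm (evalMatrix G (jw ω)) x).im ≤ 0 := by
  have hnonneg : 0 ≤ hermForm (niKer (evalMatrix G (jw ω))) x :=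
    (hG.2.2.1 ω hω hreg).dotProduct_mulVec_nonneg x
  rw [hermForm_niKer, Complex.zero_le_real] at hnonneg
  linarith

lemma IsSNI.im_hermForm_neg (hG : IsSNI G) {ω : ℝ} (hω : 0 < ω) {x : Fin n → ℂ} (hx : x ≠ 0) :
    (hermForm (evalMatrix G (jw ω)) x).im < 0 := by
  have hpos : 0 < hermForm (niKer (evalMatrix G (jw ω))) x := (hG.2 ω hω).dotProduct_mulVec_pos hx
  rw [hermForm_niKer, Complex.zero_lt_real] at hpos
  linarith

lemma IsSNI.not_hasPole (hG : IsSNI G) {s : ℂ} (hs : 0 ≤ s.re) : ¬ HasPole G s :=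
  fun ⟨i, j, hij⟩ => hG.1.2 s hs i j hij

lemma IsSNI.isNI (hG : IsSNI G) : IsNI G :=
  ⟨hG.1.1, fun _ hs => hG.not_hasPole hs.le, fun ω hω _ => (hG.2 ω hω).posSemidef,
    fun ω _ hpole => absurd hpole (hG.not_hasPole (jw_re ω).ge),
    fun hpole => absurd hpole (hG.not_hasPole le_rfl)⟩

lemma IsNI.eventually_im_hermForm_nonpos (hG : IsNI G) {l : Filter ℝ} (hl : l ≤ cofinite)
    (hpos : ∀ᶠ ω in l, 0 < ω) (x : Fin n → ℂ) :
    ∀ᶠ ω in l, (hermForm (evalMatrix G (jw ω)) x).im ≤ 0 := by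
  have hreg := (jw_injective.tendsto_cofinite.mono_left hl).eventually
    (eventually_cofinite_mem_regularAt G)
  filter_upwards [hpos, hreg] with ω hω hω_reg
  exact hG.im_hermForm_nonpos hω (mem_regularAt_matrix_iff.1 hω_reg) x

lemma continuous_hermForm_left {m : Type*} [Fintype m] (x : m → ℂ) :
    Continuous fun M : Matrix m m ℂ => hermForm M x :=
  continuous_hermForm.comp (by fun_prop : Continuous fun M => (M, x))

/-- Testing with `x = eᵢ + i eⱼ` isolates the difference `A i j - A j i`. -/
lemma isSymm_of_im_hermForm_nonpos {m : Type*} [Fintype m] {A : Matrix m m ℝ}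
    (hA : ∀ x, (hermForm (A.map Complex.ofReal) x).im ≤ 0) : A.IsSymm := by
  classical
  have hle : ∀ i j, A i j ≤ A j i := fun i j => by
    have h := hA (Pi.single i 1 + Complex.I • Pi.single j 1)
    simp [hermForm, mulVec_add, mulVec_smul, dotProduct_add, add_dotProduct] at h
    linarith
  exact Matrix.ext fun i j => le_antisymm (hle j i) (hle i j)

lemma im_hermForm_map_ofReal_of_isSymm {m : Type*} [Fintype m] {A : Matrix m m ℝ} (hA : A.IsSymm)
    (x : m → ℂ) : (hermForm (A.map Complex.ofReal) x).im = 0 := by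
  have hherm : (A.map Complex.ofReal)ᴴ = A.map Complex.ofReal := by
    ext i j
    simp [hA.apply i j]
  exact Complex.conj_eq_iff_im.1 ((hermForm_conjTranspose _ x).symm.trans (by rw [hherm]))

lemma IsNI.isSymm_evalR_zero (hG : IsNI G) (h0 : ¬ HasPole G 0) : (evalR G 0).IsSymm := by
  refine isSymm_of_im_hermForm_nonpos fun x => ?_
  have hlim : Tendsto (fun ω => evalMatrix G (jw ω)) (𝓝[>] 0) (𝓝 (evalMatrix G 0)) :=
    (continuousAt_evalMatrix (mem_regularAt_matrix_iff.2 h0)).tendsto.comp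
      ((continuous_jw.tendsto' 0 0 jw_zero).mono_left nhdsWithin_le_nhds)
  rw [← evalMatrix_zero_point]
  exact le_of_tendsto
    (((Complex.continuous_im.comp (continuous_hermForm_left x)).tendsto _).comp hlim)
    (hG.eventually_im_hermForm_nonpos
      ((nhdsWithin_mono _ fun _ hω => ne_of_gt hω).trans (nhdsNE_le_cofinite 0))
      self_mem_nhdsWithin x)

lemma IsNI.isSymm_evalInf (hG : IsNI G) : (evalInf G).IsSymm := by
  refine isSymm_of_im_hermForm_nonpos fun x => ?_
  rw [← matrixAtInfinity_eq]
  exact le_of_tendsto (((Complex.continuous_im.comp (continuous_hermForm_left x)).tendsto _).comp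
      ((tendsto_evalMatrix_cobounded hG.1).comp tendsto_jw_atTop))
    (hG.eventually_im_hermForm_nonpos atTop_le_cofinite (eventually_gt_atTop 0) x)

lemma IsNI.im_hermForm_zero (hG : IsNI G) (h0 : ¬ HasPole G 0) (x : Fin n → ℂ) :
    (hermForm (evalMatrix G 0) x).im = 0 := by
  rw [evalMatrix_zero_point, im_hermForm_map_ofReal_of_isSymm (hG.isSymm_evalR_zero h0)]

end NegativeImaginary

section Secant

variable {G : Matrix (Fin n) (Fin n) (RatFunc ℝ)} {x : Fin n → ℂ} {s : ℂ}

/-- The quadratic form of the secant `(G(0) - G(s)) / s`. It turns a negative imaginary `G` into a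
positive real function, which extends the sign condition on the axis to the half-plane. -/
def secantForm (G : Matrix (Fin n) (Fin n) (RatFunc ℝ)) (x : Fin n → ℂ) (s : ℂ) : ℂ :=
  hermForm (evalMatrix G 0 - evalMatrix G s) x / s

lemma secantForm_star (G : Matrix (Fin n) (Fin n) (RatFunc ℝ)) (x : Fin n → ℂ) (s : ℂ) :
    secantForm G x (star s) = star (secantForm G (star x) s) := by
  have hzero : evalMatrix G 0 = (evalMatrix G 0).map star := by
    rw [← evalMatrix_star, star_zero]
  rw [secantForm, secantForm, hermForm_sub, hermForm_sub, evalMatrix_star, hermForm_map_star]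
  nth_rewrite 1 [hzero]
  rw [hermForm_map_star, star_div₀, star_sub]

lemma differentiableAt_hermForm_sub (M : Matrix (Fin n) (Fin n) ℂ) (hs : ¬ HasPole G s) :
    DifferentiableAt ℂ (fun z => hermForm (M - evalMatrix G z) x) s := by
  have hentry := fun i j => differentiableAt_evalC (mem_regularAt_matrix_iff.2 hs i j)
  simp only [hermForm, dotProduct, mulVec, evalMatrix, Matrix.sub_apply, Matrix.map_apply]
  fun_prop

lemma differentiableAt_secantForm (hs : ¬ HasPole G s) (hs0 : s ≠ 0) :
    DifferentiableAt ℂ (secantForm G x) s :=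
  (differentiableAt_hermForm_sub _ hs).div differentiableAt_id hs0

lemma tendsto_secantForm_cobounded (hG : Proper G) (x : Fin n → ℂ) :
    Tendsto (secantForm G x) (Bornology.cobounded ℂ) (𝓝 0) := by
  have hform : Tendsto (fun s => hermForm (evalMatrix G 0 - evalMatrix G s) x)
      (Bornology.cobounded ℂ) (𝓝 (hermForm (evalMatrix G 0 - matrixAtInfinity G) x)) :=
    ((continuous_hermForm_left x).tendsto _).comp
      (tendsto_const_nhds.sub (tendsto_evalMatrix_cobounded hG))
  have hprod := hform.mul tendsto_inv₀_cobounded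
  rwa [mul_zero] at hprod

lemma div_jw_re (a : ℂ) (ω : ℝ) : (a / jw ω).re = a.im / ω := by
  rw [jw, ← div_div, Complex.div_ofReal_re, Complex.div_I]
  simp

lemma IsNI.re_secantForm_jw (hG : IsNI G) (h0 : ¬ HasPole G 0) (x : Fin n → ℂ) (ω : ℝ) :
    (secantForm G x (jw ω)).re = -(hermForm (evalMatrix G (jw ω)) x).im / ω := by
  rw [secantForm, div_jw_re, hermForm_sub, Complex.sub_im, hG.im_hermForm_zero h0, zero_sub]

lemma tendsto_sub_mul_secantForm_of_not_hasPole (hs : ¬ HasPole G s) (x : Fin n → ℂ) :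
    Tendsto (fun z => (z - s) * secantForm G x z) (𝓝[≠] s) (𝓝 0) := by
  rcases eq_or_ne s 0 with rfl | hs0
  · have hlim := (differentiableAt_hermForm_sub (x := x) (evalMatrix G 0) hs).continuousAt.tendsto
    rw [sub_self, show hermForm (0 : Matrix (Fin n) (Fin n) ℂ) x = 0 by simp [hermForm]] at hlim
    refine (hlim.mono_left nhdsWithin_le_nhds).congr' ?_
    filter_upwards [self_mem_nhdsWithin] with z hz
    rw [secantForm, sub_zero, mul_div_cancel₀ _ hz]
  · have hcont : ContinuousAt (fun z => (z - s) * secantForm G x z) s :=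
      (by fun_prop : ContinuousAt (fun z => z - s) s).mul
        (differentiableAt_secantForm hs hs0).continuousAt
    simpa using hcont.tendsto.mono_left nhdsWithin_le_nhds

lemma IsNI.exists_residue_secantForm (hG : IsNI G) {ω : ℝ} (hω : 0 < ω) (hpole : HasPole G (jw ω))
    (x : Fin n → ℂ) : ∃ r : ℝ, 0 ≤ r ∧
      Tendsto (fun z => (z - jw ω) * secantForm G x z) (𝓝[≠] jw ω) (𝓝 (r : ℂ)) := by
  obtain ⟨R, hR, hlim⟩ := hG.2.2.2.1 ω hω hpole
  obtain ⟨ρ, hρ, hRx⟩ := RCLike.nonneg_iff_exists_ofReal.1 (hR.dotProduct_mulVec_nonneg x)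
  have hne : (ω : ℂ) ≠ 0 := Complex.ofReal_ne_zero.2 hω.ne'
  have hz : Tendsto id (𝓝[≠] jw ω) (𝓝 (jw ω)) := nhdsWithin_le_nhds
  have hform : Tendsto (fun z => hermForm ((z - jw ω) • Complex.I • evalM G z) x)
      (𝓝[≠] jw ω) (𝓝 (ρ : ℂ)) :=
    (((continuous_hermForm_left x).tendsto R).comp hlim).trans_eq
      (congrArg 𝓝 hRx.symm)
  have hmain : Tendsto (fun z => ((z - jw ω) * hermForm (evalMatrix G 0) x +
      Complex.I * hermForm ((z - jw ω) • Complex.I • evalM G z) x) / z) (𝓝[≠] jw ω)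
      (𝓝 (((jw ω - jw ω) * hermForm (evalMatrix G 0) x + Complex.I * ρ) / jw ω)) :=
    (((hz.sub_const _).mul_const _).add (hform.const_mul _)).div hz
      (mul_ne_zero Complex.I_ne_zero hne)
  have hvalue : ((jw ω - jw ω) * hermForm (evalMatrix G 0) x + Complex.I * ρ) / jw ω =
      ((ρ / ω : ℝ) : ℂ) := by
    rw [sub_self, zero_mul, zero_add, jw, mul_div_mul_left _ _ Complex.I_ne_zero,
      Complex.ofReal_div]
  refine ⟨ρ / ω, div_nonneg hρ hω.le, hvalue ▸ hmain.congr fun z => ?_⟩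
  rw [secantForm, hermForm_smul, hermForm_smul, hermForm_sub]
  change _ = (z - jw ω) * ((hermForm (evalMatrix G 0) x - hermForm (evalM G z) x) / z)
  linear_combination ((z - jw ω) * hermForm (evalM G z) x / z) * Complex.I_mul_I

lemma IsNI.eventually_neg_le_re_secantForm_jw (hG : IsNI G) (h0 : ¬ HasPole G 0) {ω : ℝ}
    (hω : 0 ≤ ω) (x : Fin n → ℂ) {ε : ℝ} (hε : 0 < ε) :
    ∀ᶠ z in 𝓝[{s | 0 < s.re}] jw ω, -ε ≤ (secantForm G x z).re := by
  have hres : ∃ r : ℝ, 0 ≤ r ∧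
      Tendsto (fun z => (z - jw ω) * secantForm G x z) (𝓝[≠] jw ω) (𝓝 (r : ℂ)) := by
    by_cases hpole : HasPole G (jw ω)
    · have hne : 0 ≠ ω := fun h => h0 (by rwa [← h, jw_zero] at hpole)
      exact hG.exists_residue_secantForm (hω.lt_of_ne hne) hpole x
    · exact ⟨0, le_rfl, by simpa using tendsto_sub_mul_secantForm_of_not_hasPole hpole x⟩
  obtain ⟨r, hr, hlim⟩ := hres
  have hdiff : ∀ᶠ z in cofinite, DifferentiableAt ℂ (secantForm G x) z := by
    filter_upwards [eventually_cofinite_mem_regularAt G, eventually_cofinite_ne 0] with z hz hz0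
    exact differentiableAt_secantForm (mem_regularAt_matrix_iff.1 hz) hz0
  have hpos : ∀ᶠ ν in 𝓝[>] ω, 0 < ν :=
    eventually_nhdsWithin_of_forall fun ν hν => hω.trans_lt hν
  have hsign := hG.eventually_im_hermForm_nonpos
    ((nhdsWithin_mono _ fun ν hν => ne_of_gt hν).trans (nhdsNE_le_cofinite ω)) hpos x
  refine eventually_neg_le_re_of_residue_nonneg (jw_re ω) hr
    (hdiff.filter_mono (nhdsNE_le_cofinite _)) hlim ?_ hε
  rw [jw_im]
  filter_upwards [hsign, hpos] with ν hν hν_pos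
  rw [hG.re_secantForm_jw h0]
  exact div_nonneg (neg_nonneg.2 hν) hν_pos.le

lemma tendsto_star_nhdsWithin_re_pos (s : ℂ) :
    Tendsto star (𝓝[{z | 0 < z.re}] s) (𝓝[{z | 0 < z.re}] (star s)) :=
  tendsto_nhdsWithin_of_tendsto_nhds_of_eventually_within _
    ((continuous_star.tendsto s).mono_left nhdsWithin_le_nhds)
    (eventually_nhdsWithin_of_forall fun _ hz => hz)

lemma IsNI.eventually_neg_le_re_secantForm (hG : IsNI G) (h0 : ¬ HasPole G 0) (hs : s.re = 0)
    (x : Fin n → ℂ) {ε : ℝ} (hε : 0 < ε) :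
    ∀ᶠ z in 𝓝[{s | 0 < s.re}] s, -ε ≤ (secantForm G x z).re := by
  obtain ⟨ω, rfl⟩ : ∃ ω, jw ω = s := ⟨_, jw_im_of_re_eq_zero hs⟩
  rcases le_total 0 ω with hω | hω
  · exact hG.eventually_neg_le_re_secantForm_jw h0 hω x hε
  · have hstar := tendsto_star_nhdsWithin_re_pos (jw ω)
    rw [star_jw] at hstar
    filter_upwards [hstar.eventually
      (hG.eventually_neg_le_re_secantForm_jw h0 (neg_nonneg.2 hω) (star x) hε)] with z hz
    rwa [secantForm_star, star_star] at hz

theorem IsNI.re_secantForm_nonneg (hG : IsNI G) (h0 : ¬ HasPole G 0) (x : Fin n → ℂ)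
    (hs : 0 < s.re) : 0 ≤ (secantForm G x s).re := by
  refine re_nonneg_of_re_nonneg_frontier (fun z hz => ?_)
    (fun z hz ε hε => hG.eventually_neg_le_re_secantForm h0 hz x hε)
    (tendsto_secantForm_cobounded hG.1 x) hs
  have hz0 : z ≠ 0 := fun h => (h ▸ hz : 0 < (0 : ℂ).re).ne rfl
  exact (differentiableAt_secantForm (hG.2.1 z hz) hz0).differentiableWithinAt

lemma hermForm_map_ofReal (A : Matrix (Fin n) (Fin n) ℝ) (v : Fin n → ℝ) :
    hermForm (A.map Complex.ofReal) (fun i => (v i : ℂ)) = ((v ⬝ᵥ A *ᵥ v : ℝ) : ℂ) := by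
  simp [hermForm, dotProduct, mulVec]

lemma IsNI.re_hermForm_sub_matrixAtInfinity_nonneg (hG : IsNI G) (h0 : ¬ HasPole G 0)
    (x : Fin n → ℂ) : 0 ≤ (hermForm (evalMatrix G 0 - matrixAtInfinity G) x).re := by
  have hreal : Tendsto Complex.ofReal atTop (Bornology.cobounded ℂ) :=
    tendsto_norm_atTop_iff_cobounded.1 (by simpa using tendsto_abs_atTop_atTop)
  have hcont : Continuous fun M : Matrix (Fin n) (Fin n) ℂ =>
      (hermForm (evalMatrix G 0 - M) x).re :=
    Complex.continuous_re.comp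
      ((continuous_hermForm_left x).comp (continuous_const.sub continuous_id))
  have hlim : Tendsto (fun σ : ℝ => (hermForm (evalMatrix G 0 - evalMatrix G σ) x).re) atTop
      (𝓝 (hermForm (evalMatrix G 0 - matrixAtInfinity G) x).re) :=
    (hcont.tendsto _).comp ((tendsto_evalMatrix_cobounded hG.1).comp hreal)
  refine ge_of_tendsto hlim ((eventually_gt_atTop 0).mono fun σ hσ => ?_)
  have hsecant := hG.re_secantForm_nonneg h0 x (s := σ) (by simpa using hσ)
  rwa [secantForm, Complex.div_ofReal_re, le_div_iff₀ hσ, zero_mul] at hsecant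

open scoped MatrixOrder in
lemma IsNI.evalInf_le_evalR_zero (hG : IsNI G) (h0 : ¬ HasPole G 0) : evalInf G ≤ evalR G 0 := by
  refine Matrix.le_iff.2 (PosSemidef.of_dotProduct_mulVec_nonneg
    (isHermitian_iff_isSymm.2 ((hG.isSymm_evalR_zero h0).sub hG.isSymm_evalInf)) fun v => ?_)
  have hnonneg := hG.re_hermForm_sub_matrixAtInfinity_nonneg h0 fun i => (v i : ℂ)
  rw [evalMatrix_zero_point, matrixAtInfinity_eq, hermForm_sub, hermForm_map_ofReal,
    hermForm_map_ofReal, ← Complex.ofReal_sub, Complex.ofReal_re] at hnonneg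
  rwa [star_trivial, sub_mulVec, dotProduct_sub]

end Secant

section HalfPlaneBounds

open scoped Matrix.Norms.Operator

lemma exists_continuousLinearMap_loopMatrix {m : Type*} [Finite m] [DecidableEq m] :
    ∃ L : (Matrix m m ℂ × Matrix m m ℂ) →L[ℂ] Matrix (m ⊕ m) (m ⊕ m) ℂ,
      ∀ Q C, loopMatrix Q C = 1 + L (Q, C) := by
  let L : (Matrix m m ℂ × Matrix m m ℂ) →ₗ[ℂ] Matrix (m ⊕ m) (m ⊕ m) ℂ :=
    { toFun := fun p => fromBlocks 0 (-p.1) (-p.2) 0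
      map_add' := fun p q => by simp [fromBlocks_add, add_comm]
      map_smul' := fun c p => by simp [fromBlocks_smul] }
  refine ⟨LinearMap.toContinuousLinearMap L, fun Q C => ?_⟩
  simp [L, loopMatrix, ← fromBlocks_one, fromBlocks_add]

variable {m : Type*} [Fintype m] [DecidableEq m]

lemma differentiableAt_evalMatrix {A : Matrix m m (RatFunc ℝ)} {s : ℂ}
    (hA : A ∈ (regularAt s).matrix) : DifferentiableAt ℂ (evalMatrix A) s := by
  have hsum : evalMatrix A = fun z => ∑ i, ∑ j, evalC (A i j) z • Matrix.single i j (1 : ℂ) :=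
    funext fun z => by
      rw [matrix_eq_sum_single (evalMatrix A z)]
      simp [evalMatrix, smul_single]
  rw [hsum]
  exact DifferentiableAt.fun_sum fun i _ => DifferentiableAt.fun_sum fun j _ =>
    (differentiableAt_evalC (hA i j)).smul_const _

lemma exists_norm_evalMatrix_le {A : Matrix m m (RatFunc ℝ)}
    (hA : ∀ i j, (A i j).num.degree ≤ (A i j).denom.degree) {a : ℝ}
    (hreg : ∀ s : ℂ, a ≤ s.re → A ∈ (regularAt s).matrix) :
    ∃ B, ∀ s : ℂ, a ≤ s.re → ‖evalMatrix A s‖ ≤ B := by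
  have hev := (tendsto_evalMatrix_cobounded hA).norm.eventually_lt_const (lt_add_one _)
  obtain ⟨R, -, hR⟩ := hasBasis_cobounded_norm.eventually_iff.1 hev
  have hK : IsCompact (Metric.closedBall (0 : ℂ) R ∩ {z | a ≤ z.re}) :=
    (isCompact_closedBall _ _).inter_right (isClosed_le continuous_const Complex.continuous_re)
  obtain ⟨B, hB⟩ := hK.exists_bound_of_continuousOn fun s hs =>
    (continuousAt_evalMatrix (hreg s hs.2)).continuousWithinAt
  refine ⟨max B (‖matrixAtInfinity A‖ + 1), fun s hs => ?_⟩
  rcases le_total R ‖s‖ with hle | hle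
  · exact (hR hle).le.trans (le_max_right _ _)
  · exact (hB s ⟨by simpa using hle, hs⟩).trans (le_max_left _ _)

lemma norm_loopMatrix_sub_loopMatrix_le (Q Q' C : Matrix m m ℂ) :
    ‖loopMatrix Q C - loopMatrix Q' C‖ ≤ ‖Q - Q'‖ := by
  rw [linfty_opNorm_eq_opNorm]
  refine ContinuousLinearMap.opNorm_le_bound _ (norm_nonneg _) fun z => ?_
  obtain ⟨⟨x, y⟩, rfl⟩ := (Equiv.sumArrowEquivProdArrow m m ℂ).symm.surjective z
  have hdiff : (loopMatrix Q C - loopMatrix Q' C) *ᵥ Sum.elim x y =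
      Sum.elim (-((Q - Q') *ᵥ y)) 0 := by
    rw [sub_mulVec, loopMatrix_mulVec_sumElim, loopMatrix_mulVec_sumElim, sub_mulVec]
    ext (i | i) <;> simp
  calc ‖(loopMatrix Q C - loopMatrix Q' C) *ᵥ Sum.elim x y‖
      = ‖(Q - Q') *ᵥ y‖ := by
        rw [hdiff, norm_sumElim, norm_neg, norm_zero, max_eq_left (norm_nonneg _)]
    _ ≤ ‖Q - Q'‖ * ‖y‖ := linfty_opNorm_mulVec _ _
    _ ≤ ‖Q - Q'‖ * ‖Sum.elim x y‖ := by
        rw [norm_sumElim]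
        exact mul_le_mul_of_nonneg_left (le_max_right _ _) (norm_nonneg _)

lemma tendstoUniformlyOn_loopMatrix_smul {Q : ℂ → Matrix m m ℂ} {B : ℝ} {S : Set ℂ}
    (hQ : ∀ s ∈ S, ‖Q s‖ ≤ B) (C : ℂ → Matrix m m ℂ) (τ : ℝ) :
    TendstoUniformlyOn (fun (τ : ℝ) s => loopMatrix ((τ : ℂ) • Q s) (C s))
      (fun s => loopMatrix ((τ : ℂ) • Q s) (C s)) (𝓝 τ) S := by
  have hdist (τ' : ℝ) {s : ℂ} (hs : s ∈ S) :
      dist (loopMatrix ((τ : ℂ) • Q s) (C s)) (loopMatrix ((τ' : ℂ) • Q s) (C s)) ≤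
        |τ - τ'| * B := by
    rw [dist_eq_norm]
    refine (norm_loopMatrix_sub_loopMatrix_le _ _ _).trans ?_
    rw [← sub_smul, ← Complex.ofReal_sub, norm_smul, Complex.norm_real, Real.norm_eq_abs]
    exact mul_le_mul_of_nonneg_left (hQ s hs) (abs_nonneg _)
  have hlim : Tendsto (fun τ' : ℝ => |τ - τ'| * B) (𝓝 τ) (𝓝 0) :=
    Continuous.tendsto' (by fun_prop) _ _ (by simp)
  refine Metric.tendstoUniformlyOn_iff.2 fun ε hε => ?_
  filter_upwards [hlim.eventually_lt_const hε] with τ' hτ' s hs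
  exact (hdist τ' hs).trans_lt hτ'

lemma boundedBelow_loopMatrix_of_axis {Q C : ℂ → Matrix m m ℂ}
    (hQ : DiffContOnCl ℂ Q {s | 0 < s.re}) (hC : DiffContOnCl ℂ C {s | 0 < s.re}) {BQ BC κ : ℝ}
    (hBQ : ∀ s : ℂ, 0 ≤ s.re → ‖Q s‖ ≤ BQ) (hBC : ∀ s : ℂ, 0 ≤ s.re → ‖C s‖ ≤ BC) (hκ : 0 < κ)
    (haxis : ∀ τ ∈ Set.Icc (0 : ℝ) 1, ∀ ω,
      BoundedBelow κ (loopMatrix ((τ : ℂ) • Q (jw ω)) (C (jw ω))))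
    {τ : ℝ} (hτ : τ ∈ Set.Icc (0 : ℝ) 1) {s : ℂ} (hs : 0 ≤ s.re) :
    BoundedBelow κ (loopMatrix ((τ : ℂ) • Q s) (C s)) := by
  obtain ⟨L, hL⟩ := exists_continuousLinearMap_loopMatrix (m := m)
  have hBC0 : 0 ≤ BC := (norm_nonneg _).trans (hBC 0 le_rfl)
  refine boundedBelow_of_isPreconnected (A := fun (τ : ℝ) s => loopMatrix ((τ : ℂ) • Q s) (C s))
    isPreconnected_Icc (fun τ _ => ?_) (fun τ _ => ?_) hκ haxis
    (Set.left_mem_Icc.2 zero_le_one) (show 0 < (1 + BC)⁻¹ by positivity) (fun s hs => ?_) hτ hs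
  · simp only [hL]
    have hpair : DiffContOnCl ℂ (fun s => ((τ : ℂ) • Q s, C s)) {s | 0 < s.re} :=
      ⟨(hQ.const_smul (τ : ℂ)).1.prodMk hC.1, (hQ.const_smul (τ : ℂ)).2.prodMk hC.2⟩
    exact (L.differentiable.comp_diffContOnCl hpair).const_add 1
  · exact fun u hu =>
      (tendstoUniformlyOn_loopMatrix_smul hBQ C τ u hu).filter_mono nhdsWithin_le_nhds
  · simpa using boundedBelow_loopMatrix_zero (hBC s hs)

end HalfPlaneBounds

section ClosedLoop

open scoped Matrix.Norms.Operator

lemma norm_entry_le_norm {m : Type*} [Fintype m] (A : Matrix m m ℂ) (i j : m) : ‖A i j‖ ≤ ‖A‖ := by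
  classical
  calc ‖A i j‖ = ‖(A *ᵥ Pi.single j 1) i‖ := by simp
    _ ≤ ‖A *ᵥ Pi.single j 1‖ := norm_le_pi_norm _ i
    _ ≤ ‖A‖ * ‖(Pi.single j 1 : m → ℂ)‖ := linfty_opNorm_mulVec _ _
    _ = ‖A‖ := by rw [Pi.norm_single, norm_one, mul_one]

lemma tendsto_add_ofReal_nhdsGT (s : ℂ) :
    Tendsto (fun δ : ℝ => s + (δ : ℂ)) (𝓝[>] 0) (𝓝[≠] s) := by
  refine tendsto_nhdsWithin_iff.2 ⟨?_, ?_⟩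
  · have hcont : Continuous fun δ : ℝ => s + (δ : ℂ) := by fun_prop
    exact (hcont.tendsto' 0 s (by simp)).mono_left nhdsWithin_le_nhds
  · exact eventually_nhdsWithin_of_forall fun δ hδ => by simpa using ne_of_gt hδ

lemma memRHinf_of_norm_le {m : Type*} [Fintype m] [DecidableEq m] {H : Matrix m m (RatFunc ℝ)}
    {B : ℝ} (hB : ∀ s : ℂ, 0 < s.re → H ∈ (regularAt s).matrix → ‖evalMatrix H s‖ ≤ B) :
    MemRHinf H := by
  have hentry {s : ℂ} (hs : 0 < s.re) (hH : H ∈ (regularAt s).matrix) (i j : m) :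
      ‖evalC (H i j) s‖ ≤ B := (norm_entry_le_norm (evalMatrix H s) i j).trans (hB s hs hH)
  refine ⟨fun i j => degree_num_le_of_eventually_norm_le (K := B) ?_, fun s hs i j => ?_⟩
  · filter_upwards [(Complex.ofReal_injective.tendsto_cofinite.mono_left
      atTop_le_cofinite).eventually (eventually_cofinite_mem_regularAt H),
      eventually_gt_atTop 0] with x hreg hx
    exact hentry (by simpa using hx) hreg i j
  · have hlim := tendsto_add_ofReal_nhdsGT s
    refine not_isPoleAt_of_eventually_norm_le (hlim.mono_right nhdsWithin_le_nhds)
      (K := B) (eventually_map.2 ?_)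
    filter_upwards [(hlim.mono_right (nhdsNE_le_cofinite s)).eventually
      (eventually_cofinite_mem_regularAt H), self_mem_nhdsWithin] with δ hreg hδ
    exact ⟨hreg i j, hentry (by simpa using add_pos_of_nonneg_of_pos hs hδ) hreg i j⟩

variable {Q C : Matrix (Fin n) (Fin n) (RatFunc ℝ)} {s : ℂ}

/-- The transfer matrix `[I; C] (I - QC)⁻¹ [I, Q]` whose membership in `RH∞` is stability. -/
def closedLoop (Q C : Matrix (Fin n) (Fin n) (RatFunc ℝ)) :
    Matrix (Fin n ⊕ Fin n) (Fin n ⊕ Fin n) (RatFunc ℝ) :=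
  fromBlocks (1 - Q * C)⁻¹ ((1 - Q * C)⁻¹ * Q) (C * (1 - Q * C)⁻¹) (C * (1 - Q * C)⁻¹ * Q)

lemma fromBlocks_mem_regularAt_matrix {A B C D : Matrix (Fin n) (Fin n) (RatFunc ℝ)}
    (hA : A ∈ (regularAt s).matrix) (hB : B ∈ (regularAt s).matrix)
    (hC : C ∈ (regularAt s).matrix) (hD : D ∈ (regularAt s).matrix) :
    fromBlocks A B C D ∈ (regularAt s).matrix
  | Sum.inl i, Sum.inl j => hA i j
  | Sum.inl i, Sum.inr j => hB i j
  | Sum.inr i, Sum.inl j => hC i j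
  | Sum.inr i, Sum.inr j => hD i j

lemma loopMatrix_mem_regularAt_matrix (hQ : Q ∈ (regularAt s).matrix)
    (hC : C ∈ (regularAt s).matrix) : loopMatrix Q C ∈ (regularAt s).matrix :=
  fromBlocks_mem_regularAt_matrix (one_mem _) (neg_mem hQ) (neg_mem hC) (one_mem _)

lemma evalMatrix_loopMatrix (hQ : Q ∈ (regularAt s).matrix) (hC : C ∈ (regularAt s).matrix) :
    evalMatrix (loopMatrix Q C) s = loopMatrix (evalMatrix Q s) (evalMatrix C s) := by
  rw [loopMatrix, evalMatrix_fromBlocks, evalMatrix_one, evalMatrix_neg hQ, evalMatrix_neg hC,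
    loopMatrix]

lemma evalMatrix_closedLoop_add_mul_loopMatrix (hdet : (1 - Q * C).det ≠ 0)
    (hQ : Q ∈ (regularAt s).matrix) (hC : C ∈ (regularAt s).matrix)
    (hloop : closedLoop Q C ∈ (regularAt s).matrix) :
    (evalMatrix (closedLoop Q C) s + fromBlocks 0 0 0 1) *
      loopMatrix (evalMatrix Q s) (evalMatrix C s) = 1 := by
  have hmul : (closedLoop Q C + fromBlocks 0 0 0 1) * loopMatrix Q C = 1 := by
    rw [closedLoop, fromBlocks_add, add_zero, add_zero, add_zero]
    exact mul_loopMatrix_eq_one (nonsing_inv_mul _ (isUnit_iff_ne_zero.2 hdet))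
  have hconst : (fromBlocks 0 0 0 1 : Matrix (Fin n ⊕ Fin n) (Fin n ⊕ Fin n) (RatFunc ℝ)) ∈
      (regularAt s).matrix :=
    fromBlocks_mem_regularAt_matrix (zero_mem _) (zero_mem _) (zero_mem _) (one_mem _)
  have heval := congrArg (evalMatrix · s) hmul
  simpa only [evalMatrix_mul (add_mem hloop hconst) (loopMatrix_mem_regularAt_matrix hQ hC),
    evalMatrix_add hloop hconst, evalMatrix_fromBlocks, evalMatrix_zero, evalMatrix_one,
    evalMatrix_loopMatrix hQ hC] using heval

lemma feedbackStable_of_boundedBelow {κ : ℝ} (hκ : 0 < κ)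
    (hQ : ∀ s : ℂ, 0 < s.re → Q ∈ (regularAt s).matrix)
    (hC : ∀ s : ℂ, 0 < s.re → C ∈ (regularAt s).matrix)
    (h : ∀ s : ℂ, 0 < s.re → BoundedBelow κ (loopMatrix (evalMatrix Q s) (evalMatrix C s))) :
    FeedbackStable Q C := by
  have hdet : (1 - Q * C).det ≠ 0 := fun hzero => by
    have hone : (0 : ℝ) < (1 : ℂ).re := zero_lt_one
    have hunit := (isUnit_iff_isUnit_det _).1 ((h 1 hone).isUnit hκ)
    rw [← evalMatrix_loopMatrix (hQ 1 hone) (hC 1 hone),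
      ← evalC_det (loopMatrix_mem_regularAt_matrix (hQ 1 hone) (hC 1 hone)), det_loopMatrix,
      hzero] at hunit
    simp [evalC] at hunit
  refine ⟨hdet, memRHinf_of_norm_le (H := closedLoop Q C)
    (B := κ⁻¹ + ‖(fromBlocks 0 0 0 1 : Matrix (Fin n ⊕ Fin n) (Fin n ⊕ Fin n) ℂ)‖)
    fun s hs hloop => ?_⟩
  have hinv := (h s hs).norm_inv_le hκ
  rw [inv_eq_left_inv (evalMatrix_closedLoop_add_mul_loopMatrix hdet (hQ s hs) (hC s hs) hloop)]
    at hinv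
  have htri := norm_sub_le (evalMatrix (closedLoop Q C) s + fromBlocks 0 0 0 1)
    (fromBlocks 0 0 0 1)
  rw [add_sub_cancel_right] at htri
  linarith

lemma FeedbackStable.det_loopMatrix_ne_zero (h : FeedbackStable Q C) (hs : 0 ≤ s.re)
    (hQ : Q ∈ (regularAt s).matrix) (hC : C ∈ (regularAt s).matrix) :
    (loopMatrix (evalMatrix Q s) (evalMatrix C s)).det ≠ 0 :=
  (isUnit_det_of_left_inverse
    (evalMatrix_closedLoop_add_mul_loopMatrix h.1 hQ hC (h.2.2 s hs))).ne_zero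

lemma FeedbackStable.det_loopMatrix_ne_zero_of_tendsto {Q₁ C₁ : Matrix (Fin n) (Fin n) ℂ}
    (h : FeedbackStable Q C) (hQ : Tendsto (evalMatrix Q) (Bornology.cobounded ℂ) (𝓝 Q₁))
    (hC : Tendsto (evalMatrix C) (Bornology.cobounded ℂ) (𝓝 C₁)) :
    (loopMatrix Q₁ C₁).det ≠ 0 := by
  have hlim : Tendsto (fun s => (evalMatrix (closedLoop Q C) s + fromBlocks 0 0 0 1) *
      loopMatrix (evalMatrix Q s) (evalMatrix C s)) (Bornology.cobounded ℂ)
      (𝓝 ((matrixAtInfinity (closedLoop Q C) + fromBlocks 0 0 0 1) * loopMatrix Q₁ C₁)) :=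
    ((tendsto_evalMatrix_cobounded h.2.1).add_const _).mul (tendsto_loopMatrix hQ hC)
  refine (isUnit_det_of_left_inverse
    (tendsto_nhds_unique (hlim.congr' ?_) tendsto_const_nhds)).ne_zero
  have hreg := fun A : Matrix (Fin n) (Fin n) (RatFunc ℝ) =>
    (eventually_cofinite_mem_regularAt A).filter_mono (Bornology.le_cofinite ℂ)
  filter_upwards [hreg Q, hreg C, (eventually_cofinite_mem_regularAt (closedLoop Q C)).filter_mono
    (Bornology.le_cofinite ℂ)] with s hQs hCs hloop
  exact evalMatrix_closedLoop_add_mul_loopMatrix h.1 hQs hCs hloop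

end ClosedLoop

section Regularization

open scoped Matrix.Norms.Operator

/-- The plant `P(0) - s/(s+δ) (P(0) - P(s+δ))`. The shift by `δ` moves the poles of `P` on the
imaginary axis into the open left half-plane, while the factor `s/(s+δ)` keeps the value `P(0)` and
the negative imaginary property. -/
def regularizedPlant (P : Matrix (Fin n) (Fin n) (RatFunc ℝ)) (δ : ℝ) (s : ℂ) :
    Matrix (Fin n) (Fin n) ℂ :=
  evalMatrix P 0 - (s / (s + δ)) • (evalMatrix P 0 - evalMatrix P (s + δ))

variable {P : Matrix (Fin n) (Fin n) (RatFunc ℝ)} {δ : ℝ} {s : ℂ}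

lemma regularizedPlant_star (P : Matrix (Fin n) (Fin n) (RatFunc ℝ)) (δ : ℝ) (s : ℂ) :
    regularizedPlant P δ (star s) = (regularizedPlant P δ s).map star := by
  have hstar : star s + δ = star (s + δ) := by simp
  have hzero : (evalMatrix P 0).map star = evalMatrix P 0 := by
    rw [← evalMatrix_star, star_zero]
  rw [regularizedPlant, hstar, evalMatrix_star, ← hzero]
  ext i j
  simp [regularizedPlant]

lemma re_add_ofReal_pos (hδ : 0 < δ) (hs : 0 ≤ s.re) : 0 < (s + δ).re := by
  simpa using add_pos_of_nonneg_of_pos hs hδ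

lemma add_ofReal_ne_zero (hδ : 0 < δ) (hs : 0 ≤ s.re) : s + δ ≠ 0 := fun h =>
  (re_add_ofReal_pos hδ hs).ne' (by rw [h, Complex.zero_re])

lemma norm_div_add_ofReal_le_one (hδ : 0 < δ) (hs : 0 ≤ s.re) : ‖s / (s + δ)‖ ≤ 1 := by
  rw [norm_div]
  refine div_le_one_of_le₀ ?_ (norm_nonneg _)
  rw [← sq_le_sq₀ (norm_nonneg _) (norm_nonneg _), Complex.sq_norm, Complex.sq_norm,
    Complex.normSq_apply, Complex.normSq_apply, Complex.add_re, Complex.add_im, Complex.ofReal_re,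
    Complex.ofReal_im]
  nlinarith

lemma IsNI.im_hermForm_regularizedPlant_nonpos (hP : IsNI P) (h0 : ¬ HasPole P 0) (hδ : 0 < δ)
    {ω : ℝ} (hω : 0 < ω) (x : Fin n → ℂ) : (hermForm (regularizedPlant P δ (jw ω)) x).im ≤ 0 := by
  have hform : hermForm (regularizedPlant P δ (jw ω)) x =
      hermForm (evalMatrix P 0) x - jw ω * secantForm P x (jw ω + δ) := by
    rw [regularizedPlant, secantForm, hermForm_sub, hermForm_smul]
    ring
  have hsecant := hP.re_secantForm_nonneg h0 x (re_add_ofReal_pos hδ (jw_re ω).ge)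
  rw [hform, Complex.sub_im, hP.im_hermForm_zero h0, Complex.mul_im, jw_re, jw_im]
  nlinarith

lemma differentiableAt_regularizedPlant (hP : IsNI P) (hδ : 0 < δ) (hs : 0 ≤ s.re) :
    DifferentiableAt ℂ (regularizedPlant P δ) s := by
  have hshift : DifferentiableAt ℂ (fun z : ℂ => z + δ) s := differentiableAt_id.add_const _
  have heval : DifferentiableAt ℂ (fun z : ℂ => evalMatrix P (z + δ)) s :=
    DifferentiableAt.comp (g := evalMatrix P) s (differentiableAt_evalMatrix
      (mem_regularAt_matrix_iff.2 (hP.2.1 _ (re_add_ofReal_pos hδ hs)))) hshift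
  have hdiv : DifferentiableAt ℂ (fun z : ℂ => z / (z + δ)) s :=
    differentiableAt_id.fun_div hshift (add_ofReal_ne_zero hδ hs)
  exact (hdiv.fun_smul (heval.const_sub _)).const_sub _

lemma exists_norm_regularizedPlant_le (hP : IsNI P) (hδ : 0 < δ) :
    ∃ B, ∀ s : ℂ, 0 ≤ s.re → ‖regularizedPlant P δ s‖ ≤ B := by
  obtain ⟨B, hB⟩ := exists_norm_evalMatrix_le hP.1 (a := δ) fun s hs =>
    mem_regularAt_matrix_iff.2 (hP.2.1 s (hδ.trans_le hs))
  refine ⟨‖evalMatrix P 0‖ + (‖evalMatrix P 0‖ + B), fun s hs => ?_⟩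
  calc ‖regularizedPlant P δ s‖
      ≤ ‖evalMatrix P 0‖ + ‖s / (s + δ)‖ * ‖evalMatrix P 0 - evalMatrix P (s + δ)‖ :=
        (norm_sub_le _ _).trans_eq (by rw [norm_smul])
    _ ≤ ‖evalMatrix P 0‖ + ‖evalMatrix P 0 - evalMatrix P (s + δ)‖ :=
        add_le_add_right (mul_le_of_le_one_left (norm_nonneg _)
          (norm_div_add_ofReal_le_one hδ hs)) _
    _ ≤ ‖evalMatrix P 0‖ + (‖evalMatrix P 0‖ + B) := by
        grw [norm_sub_le, hB (s + δ) (by simpa using hs)]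

variable {ι : Type*} {l : Filter ι} {d : ι → ℝ} {z : ι → ℂ}

lemma tendsto_regularizedPlant_evalMatrix_zero (h0 : ¬ HasPole P 0) (hd : ∀ᶠ i in l, 0 < d i)
    (hz : ∀ᶠ i in l, 0 ≤ (z i).re) (hlim : Tendsto (fun i => z i + d i) l (𝓝 0)) :
    Tendsto (fun i => regularizedPlant P (d i) (z i)) l (𝓝 (evalMatrix P 0)) := by
  have hbdd : l.IsBoundedUnder (· ≤ ·) fun i => ‖z i / (z i + d i)‖ :=
    isBoundedUnder_of_eventually_le (a := 1) <| by
      filter_upwards [hd, hz] with i hdi hzi using norm_div_add_ofReal_le_one hdi hzi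
  have hdiff : Tendsto (fun i => evalMatrix P 0 - evalMatrix P (z i + d i)) l (𝓝 0) := by
    have heval : Tendsto (fun i => evalMatrix P (z i + d i)) l (𝓝 (evalMatrix P 0)) :=
      (continuousAt_evalMatrix (mem_regularAt_matrix_iff.2 h0)).tendsto.comp hlim
    simpa using heval.const_sub (evalMatrix P 0)
  have hsmul : Tendsto (fun i => (z i / (z i + d i)) •
      (evalMatrix P 0 - evalMatrix P (z i + d i))) l (𝓝 0) := hbdd.smul_tendsto_zero hdiff
  simpa [regularizedPlant] using hsmul.const_sub (evalMatrix P 0)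

lemma tendsto_regularizedPlant_of_tendsto_div {M : Matrix (Fin n) (Fin n) ℂ}
    (hdiv : Tendsto (fun i => z i / (z i + d i)) l (𝓝 1))
    (hP : Tendsto (fun i => evalMatrix P (z i + d i)) l (𝓝 M)) :
    Tendsto (fun i => regularizedPlant P (d i) (z i)) l (𝓝 M) := by
  simpa [regularizedPlant] using
    (hdiv.smul (hP.const_sub (evalMatrix P 0))).const_sub (evalMatrix P 0)

lemma tendsto_regularizedPlant_matrixAtInfinity (hP : IsNI P) (hd : Tendsto d l (𝓝 0))
    (hz : Tendsto z l (Bornology.cobounded ℂ)) :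
    Tendsto (fun i => regularizedPlant P (d i) (z i)) l (𝓝 (matrixAtInfinity P)) := by
  have hsum : Tendsto (fun i => z i + d i) l (Bornology.cobounded ℂ) := by
    rw [← tendsto_norm_atTop_iff_cobounded] at hz ⊢
    refine tendsto_atTop_mono (fun i => ?_) (hz.atTop_add hd.norm.neg)
    simpa using norm_sub_le_norm_add (z i) (d i)
  have hquot : Tendsto (fun i => 1 - d i * (z i + d i)⁻¹) l (𝓝 1) := by
    have hd' : Tendsto (fun i => (d i : ℂ)) l (𝓝 0) := (Complex.continuous_ofReal.tendsto 0).comp hd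
    simpa using (hd'.mul (tendsto_inv₀_cobounded.comp hsum)).const_sub 1
  refine tendsto_regularizedPlant_of_tendsto_div (hquot.congr' ?_)
    ((tendsto_evalMatrix_cobounded hP.1).comp hsum)
  filter_upwards [hsum.eventually_ne_cobounded 0] with i hi
  field_simp
  ring

lemma tendsto_regularizedPlant_nhdsGT (hP : IsNI P) (hs : 0 < s.re) :
    Tendsto (fun δ => regularizedPlant P δ s) (𝓝[>] 0) (𝓝 (evalMatrix P s)) := by
  have hsum : Tendsto (fun δ : ℝ => s + δ) (𝓝[>] 0) (𝓝 s) :=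
    (tendsto_add_ofReal_nhdsGT s).mono_right nhdsWithin_le_nhds
  have hs0 : s ≠ 0 := fun h => hs.ne' (by rw [h, Complex.zero_re])
  refine tendsto_regularizedPlant_of_tendsto_div ?_
    ((continuousAt_evalMatrix (mem_regularAt_matrix_iff.2 (hP.2.1 s hs))).tendsto.comp hsum)
  have hdiv := (tendsto_const_nhds (x := s)).div hsum hs0
  rwa [div_self hs0] at hdiv

end Regularization

section RobustStability

open scoped Matrix.Norms.Operator

variable {P C : Matrix (Fin n) (Fin n) (RatFunc ℝ)}

lemma boundedBelow_loopMatrix_regularizedPlant_star {κ δ τ : ℝ} {s : ℂ}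
    (h : BoundedBelow κ (loopMatrix ((τ : ℂ) • regularizedPlant P δ s) (evalMatrix C s))) :
    BoundedBelow κ
      (loopMatrix ((τ : ℂ) • regularizedPlant P δ (star s)) (evalMatrix C (star s))) := by
  have hsmul : (τ : ℂ) • (regularizedPlant P δ s).map star =
      ((τ : ℂ) • regularizedPlant P δ s).map star := by
    ext i j
    simp
  rw [regularizedPlant_star, evalMatrix_star, hsmul, loopMatrix_map_star]
  exact h.map_star

lemma IsNI.exists_eventually_boundedBelow_regularizedPlant_jw (hP : IsNI P) (h0 : ¬ HasPole P 0)
    (hC : IsSNI C)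
    (hdet₀ : ∀ τ ∈ Set.Icc (0 : ℝ) 1,
      (loopMatrix ((τ : ℂ) • evalMatrix P 0) (evalMatrix C 0)).det ≠ 0)
    (hdet₁ : ∀ τ ∈ Set.Icc (0 : ℝ) 1,
      (loopMatrix ((τ : ℂ) • matrixAtInfinity P) (matrixAtInfinity C)).det ≠ 0) :
    ∃ κ > 0, ∀ᶠ δ in 𝓝[>] (0 : ℝ), ∀ τ ∈ Set.Icc (0 : ℝ) 1, ∀ ω, BoundedBelow κ
      (loopMatrix ((τ : ℂ) • regularizedPlant P δ (jw ω)) (evalMatrix C (jw ω))) := by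
  have hδ {l : Filter ℝ} : Tendsto Prod.fst (𝓝[>] (0 : ℝ) ×ˢ l) (𝓝 0) :=
    tendsto_fst.mono_right nhdsWithin_le_nhds
  have hsum : Tendsto (fun p : ℝ × ℝ => jw p.2 + p.1) (𝓝[>] 0 ×ˢ 𝓝[≥] 0) (𝓝 0) := by
    have hcont : Continuous fun p : ℝ × ℝ => jw p.2 + p.1 :=
      (continuous_jw.comp continuous_snd).add (Complex.continuous_ofReal.comp continuous_fst)
    refine (hcont.tendsto' (0, 0) 0 (by simp [jw_zero])).mono_left ?_
    rw [nhds_prod_eq]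
    exact prod_mono nhdsWithin_le_nhds nhdsWithin_le_nhds
  obtain ⟨κ, hκ, haxis⟩ := exists_eventually_boundedBelow_axis (l := 𝓝[>] (0 : ℝ))
    (Q := fun δ ω => regularizedPlant P δ (jw ω)) (C := fun ω => evalMatrix C (jw ω))
    (fun ω _ => ((continuousAt_evalMatrix (mem_regularAt_matrix_iff.2
      (hC.not_hasPole (jw_re ω).ge))).comp continuous_jw.continuousAt).continuousWithinAt)
    ((tendsto_evalMatrix_cobounded hC.1.1).comp tendsto_jw_atTop)
    (tendsto_regularizedPlant_evalMatrix_zero h0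
      (tendsto_fst.eventually self_mem_nhdsWithin) (.of_forall fun p => (jw_re p.2).ge) hsum)
    (tendsto_regularizedPlant_matrixAtInfinity hP hδ (tendsto_jw_atTop.comp tendsto_snd))
    (fun ω hω x hx => hC.im_hermForm_neg hω hx)
    (eventually_nhdsWithin_of_forall fun δ hδ ω hω x =>
      hP.im_hermForm_regularizedPlant_nonpos h0 hδ hω x)
    (by simpa only [jw_zero] using hdet₀) hdet₁
  refine ⟨κ, hκ, haxis.mono fun δ hδ τ hτ ω => ?_⟩
  rcases le_total 0 ω with hω | hω
  · exact hδ τ hτ ω hω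
  · have hneg := boundedBelow_loopMatrix_regularizedPlant_star (hδ τ hτ (-ω) (neg_nonneg.2 hω))
    rwa [star_jw, neg_neg] at hneg

lemma diffContOnCl_re_pos {E : Type*} [NormedAddCommGroup E] [NormedSpace ℂ E] {f : ℂ → E}
    (hf : ∀ s : ℂ, 0 ≤ s.re → DifferentiableAt ℂ f s) : DiffContOnCl ℂ f {s | 0 < s.re} :=
  DifferentiableOn.diffContOnCl fun s hs => (hf s (by
    rwa [Complex.closure_setOfPred_lt_re] at hs)).differentiableWithinAt

lemma IsNI.exists_boundedBelow_loopMatrix (hP : IsNI P) (h0 : ¬ HasPole P 0) (hC : IsSNI C)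
    (hdet₀ : ∀ τ ∈ Set.Icc (0 : ℝ) 1,
      (loopMatrix ((τ : ℂ) • evalMatrix P 0) (evalMatrix C 0)).det ≠ 0)
    (hdet₁ : ∀ τ ∈ Set.Icc (0 : ℝ) 1,
      (loopMatrix ((τ : ℂ) • matrixAtInfinity P) (matrixAtInfinity C)).det ≠ 0) :
    ∃ κ > 0, ∀ τ ∈ Set.Icc (0 : ℝ) 1, ∀ s : ℂ, 0 < s.re →
      BoundedBelow κ (loopMatrix ((τ : ℂ) • evalMatrix P s) (evalMatrix C s)) := by
  obtain ⟨κ, hκ, haxis⟩ :=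
    hP.exists_eventually_boundedBelow_regularizedPlant_jw h0 hC hdet₀ hdet₁
  have hCreg (s : ℂ) (hs : 0 ≤ s.re) : C ∈ (regularAt s).matrix :=
    mem_regularAt_matrix_iff.2 (hC.not_hasPole hs)
  obtain ⟨BC, hBC⟩ := exists_norm_evalMatrix_le hC.1.1 hCreg
  refine ⟨κ, hκ, fun τ hτ s hs => ?_⟩
  have hlim : Tendsto (fun δ => loopMatrix ((τ : ℂ) • regularizedPlant P δ s) (evalMatrix C s))
      (𝓝[>] 0) (𝓝 (loopMatrix ((τ : ℂ) • evalMatrix P s) (evalMatrix C s))) :=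
    tendsto_loopMatrix ((tendsto_regularizedPlant_nhdsGT hP hs).const_smul _) tendsto_const_nhds
  refine (isClosed_setOf_boundedBelow κ).mem_of_tendsto hlim ?_
  filter_upwards [haxis, self_mem_nhdsWithin] with δ haxis hδ
  obtain ⟨BP, hBP⟩ := exists_norm_regularizedPlant_le hP hδ
  exact boundedBelow_loopMatrix_of_axis
    (diffContOnCl_re_pos fun s hs => differentiableAt_regularizedPlant hP hδ hs)
    (diffContOnCl_re_pos fun s hs => differentiableAt_evalMatrix (hCreg s hs))
    hBP hBC hκ haxis hτ hs.le

lemma det_loopMatrix_map_ofReal {m : Type*} [Fintype m] [DecidableEq m] (τ : ℝ)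
    (A B : Matrix m m ℝ) :
    (loopMatrix ((τ : ℂ) • A.map Complex.ofReal) (B.map Complex.ofReal)).det =
      ((1 - τ • (A * B)).det : ℝ) := by
  have hmap : 1 - (τ : ℂ) • A.map Complex.ofReal * B.map Complex.ofReal =
      Complex.ofRealHom.mapMatrix (1 - τ • (A * B)) := by
    ext i j
    simp [mul_apply, one_apply, Finset.mul_sum, apply_ite]
  rw [det_loopMatrix, hmap, ← RingHom.map_det]
  rfl

lemma det_loopMatrix_map_ofReal_ne_zero_iff {m : Type*} [Fintype m] [DecidableEq m] {τ : ℝ}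
    {A B : Matrix m m ℝ} :
    (loopMatrix ((τ : ℂ) • A.map Complex.ofReal) (B.map Complex.ofReal)).det ≠ 0 ↔
      (τ • (A * B) - 1).det ≠ 0 := by
  rw [det_loopMatrix_map_ofReal, Complex.ofReal_ne_zero, ← neg_sub, det_neg]
  simp

lemma tendsto_evalMatrix_smul_cobounded (hP : Proper P) (τ : ℝ) :
    Tendsto (evalMatrix (τ • P)) (Bornology.cobounded ℂ) (𝓝 ((τ : ℂ) • matrixAtInfinity P)) := by
  refine ((tendsto_evalMatrix_cobounded hP).const_smul (τ : ℂ)).congr' ?_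
  filter_upwards [(eventually_cofinite_mem_regularAt P).filter_mono (Bornology.le_cofinite ℂ)]
    with s hs using (evalMatrix_smul τ hs).symm

lemma IsNI.forall_feedbackStable_smul_iff (hP : IsNI P) (h0 : ¬ HasPole P 0) (hC : IsSNI C) :
    (∀ τ ∈ Set.Icc (0 : ℝ) 1, FeedbackStable (τ • P) C) ↔
      (∀ τ ∈ Set.Icc (0 : ℝ) 1, (τ • (evalR P 0 * evalR C 0) - 1).det ≠ 0) ∧
      ∀ τ ∈ Set.Icc (0 : ℝ) 1, (τ • (evalInf P * evalInf C) - 1).det ≠ 0 := by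
  have hP0 := mem_regularAt_matrix_iff.2 h0
  have hC0 := mem_regularAt_matrix_iff.2 (hC.not_hasPole (s := 0) le_rfl)
  simp only [← det_loopMatrix_map_ofReal_ne_zero_iff, ← evalMatrix_zero_point,
    ← matrixAtInfinity_eq]
  refine ⟨fun h => ⟨fun τ hτ => ?_, fun τ hτ => ?_⟩, fun ⟨hdet₀, hdet₁⟩ τ hτ => ?_⟩
  · rw [← evalMatrix_smul τ hP0]
    exact (h τ hτ).det_loopMatrix_ne_zero le_rfl (smul_mem_regularAt_matrix τ hP0) hC0
  · exact (h τ hτ).det_loopMatrix_ne_zero_of_tendsto (tendsto_evalMatrix_smul_cobounded hP.1 τ)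
      (tendsto_evalMatrix_cobounded hC.1.1)
  · obtain ⟨κ, hκ, hbdd⟩ := hP.exists_boundedBelow_loopMatrix h0 hC hdet₀ hdet₁
    have hreg (s : ℂ) (hs : 0 < s.re) := mem_regularAt_matrix_iff.2 (hP.2.1 s hs)
    refine feedbackStable_of_boundedBelow hκ
      (fun s hs => smul_mem_regularAt_matrix τ (hreg s hs))
      (fun s hs => mem_regularAt_matrix_iff.2 (hC.not_hasPole hs.le)) fun s hs => ?_
    rw [evalMatrix_smul τ (hreg s hs)]
    exact hbdd τ hτ s hs

open scoped MatrixOrder in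
lemma IsNI.det_mixed_ne_zero (hP : IsNI P) (hP0 : ¬ HasPole P 0) (hC : IsNI C)
    (hC0 : ¬ HasPole C 0)
    (hdet₀ : ∀ τ ∈ Set.Icc (0 : ℝ) 1, (τ • (evalR P 0 * evalR C 0) - 1).det ≠ 0)
    (hdet₁ : ∀ τ ∈ Set.Icc (0 : ℝ) 1, (τ • (evalInf P * evalInf C) - 1).det ≠ 0)
    {τ : ℝ} (hτ : τ ∈ Set.Icc (0 : ℝ) 1) :
    (τ • (evalR P 0 * evalInf C) - 1).det ≠ 0 ∧ (τ • (evalInf P * evalR C 0) - 1).det ≠ 0 := by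
  have hPle := hP.evalInf_le_evalR_zero hP0
  have hCle := hC.evalInf_le_evalR_zero hC0
  have hmem {X Y : Matrix (Fin n) (Fin n) ℝ} (hX : X ∈ Set.Icc (evalInf P) (evalR P 0))
      (hY : Y ∈ Set.Icc (evalInf C) (evalR C 0)) : (τ • (X * Y) - 1).det ≠ 0 :=
    det_smul_mul_sub_one_ne_zero_of_mem_Icc (hP.isSymm_evalR_zero hP0) hP.isSymm_evalInf
      (hC.isSymm_evalR_zero hC0) hC.isSymm_evalInf hdet₀ hdet₁ hX hY hτ
  exact ⟨hmem ⟨hPle, le_rfl⟩ ⟨le_rfl, hCle⟩, hmem ⟨le_rfl, hPle⟩ ⟨hCle, le_rfl⟩⟩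

end RobustStability

/-- equivalent determinant characterisations of robust stability
of `[τP, C]` for all `τ ∈ [0,1]`. -/
theorem deformation_stability_tfae {n : ℕ} (P C : Matrix (Fin n) (Fin n) (RatFunc ℝ))
    (hP : IsNI P) (hP0 : ¬ HasPole P 0) (hC : IsSNI C) :
    ((∀ τ ∈ Set.Icc (0 : ℝ) 1, FeedbackStable (τ • P) C) ↔
     (∀ τ ∈ Set.Icc (0 : ℝ) 1,
        (τ • (evalInf P * evalInf C) - 1).det ≠ 0 ∧
        (τ • (evalR P 0 * evalInf C) - 1).det ≠ 0 ∧
        (τ • (evalR P 0 * evalR C 0) - 1).det ≠ 0)) ∧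
    ((∀ τ ∈ Set.Icc (0 : ℝ) 1, FeedbackStable (τ • P) C) ↔
     (∀ τ ∈ Set.Icc (0 : ℝ) 1,
        (τ • (evalInf P * evalInf C) - 1).det ≠ 0 ∧
        (τ • (evalInf P * evalR C 0) - 1).det ≠ 0 ∧
        (τ • (evalR P 0 * evalR C 0) - 1).det ≠ 0)) := by
  have hC0 : ¬ HasPole C 0 := hC.not_hasPole le_rfl
  rw [hP.forall_feedbackStable_smul_iff hP0 hC]
  refine ⟨⟨fun ⟨hdet₀, hdet₁⟩ τ hτ => ?_, fun h => ?_⟩, fun ⟨hdet₀, hdet₁⟩ τ hτ => ?_, fun h => ?_⟩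
  · exact ⟨hdet₁ τ hτ, (hP.det_mixed_ne_zero hP0 hC.isNI hC0 hdet₀ hdet₁ hτ).1, hdet₀ τ hτ⟩
  · exact ⟨fun τ hτ => (h τ hτ).2.2, fun τ hτ => (h τ hτ).1⟩
  · exact ⟨hdet₁ τ hτ, (hP.det_mixed_ne_zero hP0 hC.isNI hC0 hdet₀ hdet₁ hτ).2, hdet₀ τ hτ⟩
  · exact ⟨fun τ hτ => (h τ hτ).2.2, fun τ hτ => (h τ hτ).1⟩

end NIControl
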